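/- arXiv:2201.10540 — 6 statements merged into one kernel-verified Lean document; each statement's English description precedes it below -/
import Mathlib

section
/- Let γ ∈ (1,2), let I = (−∞,0) or I = (0,∞), and let G ∈ C_c^2(ℝ*), with b_G > 0 such that G(u) = 0 whenever |u| ≥ b_G. Then for every u ∈ I the limit lim_{ε→0⁺} [−(−Δ)_I^{γ/2}G]_ε(u) exists, and there exists H ∈ L¹(I) such that |[−(−Δ)_I^{γ/2}G]_ε(u)| ≤ H(u) for every u ∈ I and every ε ∈ (0, b_G). -/
open MeasureTheory Filter Set Topology

/-- Transition probability `p(z) = c⋅|z|^{-γ-1}` for `z ≠ 0`, `p(0)=0`. -/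
noncomputable def transP (c γ : ℝ) (z : ℤ) : ℝ :=
  if z = 0 then 0 else c * |(z : ℝ)| ^ (-γ - 1)

/-- Truncated regional fractional Laplacian `[−(−Δ)_I^{γ/2}G]_ε(u)`. -/
noncomputable def regFracLapTrunc (c γ : ℝ) (I : Set ℝ) (G : ℝ → ℝ) (ε u : ℝ) : ℝ :=
  c * ∫ v in I ∩ {v : ℝ | ε ≤ |u - v|}, (G v - G u) / |u - v| ^ (γ + 1)

/-- `G ∈ C_c^2(ℝ*)`: `G(u) = G₋(u)1_{u<0} + G₊(u)1_{u≥0}` with `G₋, G₊` twice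
continuously differentiable with compact support. -/
def CcTwoStar (G : ℝ → ℝ) : Prop :=
  ∃ Gm Gp : ℝ → ℝ, ContDiff ℝ 2 Gm ∧ HasCompactSupport Gm ∧
    ContDiff ℝ 2 Gp ∧ HasCompactSupport Gp ∧
    ∀ u : ℝ, G u = if u < 0 then Gm u else Gp u

/-- Along the real line, an even function is integrable once it is integrable on the positives. -/
theorem integrable_comp_abs_of_integrableOn_Ioi {f : ℝ → ℝ} (hf : IntegrableOn f (Ioi 0)) :
    Integrable fun x => f |x| := by
  have hpos : IntegrableOn (fun x => f |x|) (Ioi 0) :=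
    hf.congr_fun (fun x hx => by simp [abs_of_pos (mem_Ioi.mp hx)]) measurableSet_Ioi
  have hneg : IntegrableOn (fun x => f |x|) (Iic 0) := by
    have h := hpos.comp_neg
    simp only [abs_neg, neg_Ioi, neg_zero] at h
    exact Iff.mpr integrableOn_Iic_iff_integrableOn_Iio h
  rw [← integrableOn_univ, ← Iic_union_Ioi (a := (0 : ℝ))]
  exact hneg.union hpos

/-- The first-order Taylor remainder is quadratic when the derivative is Lipschitz. -/
theorem abs_taylor_remainder_le {F : ℝ → ℝ} (hF : Differentiable ℝ F) {K : NNReal}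
    (hK : LipschitzWith K (deriv F)) (u v : ℝ) :
    |F v - F u - deriv F u * (v - u)| ≤ K * |v - u| ^ 2 := by
  have h := Convex.norm_image_sub_le_of_norm_hasDerivWithin_le
    (f := fun x => F x - deriv F u * x) (f' := fun x => deriv F x - deriv F u) (s := uIcc u v)
    (x := u) (y := v) (C := K * |v - u|)
    (fun x _ => by
      have h1 := (hF x).hasDerivAt.fun_sub ((hasDerivAt_id' x).const_mul (deriv F u))
      simpa using h1.hasDerivWithinAt)
    (fun x hx => by
      have h1 := hK.dist_le_mul x u
      rw [Real.dist_eq, Real.dist_eq] at h1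
      exact h1.trans (mul_le_mul_of_nonneg_left (abs_sub_left_of_mem_uIcc hx) K.2))
    (convex_uIcc u v) left_mem_uIcc right_mem_uIcc
  simp only [Real.norm_eq_abs] at h
  calc _ = |F v - deriv F u * v - (F u - deriv F u * u)| := by congr 1; ring
    _ ≤ _ := h.trans_eq (by ring)

/-- The radial majorant of the compensated kernel at distance `u` from the boundary. -/
noncomputable def radialMajorant (γ K L u x : ℝ) : ℝ :=
  (Ioo 0 u).indicator (fun x => K * x ^ (1 - γ)) x + (Ici u).indicator (fun x => L * x ^ (-γ)) x

theorem radialMajorant_nonneg (γ : ℝ) {K L u : ℝ} (hK : 0 ≤ K) (hL : 0 ≤ L) (hu : 0 ≤ u) (x : ℝ) :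
    0 ≤ radialMajorant γ K L u x :=
  add_nonneg (indicator_nonneg (fun _ hx => mul_nonneg hK (Real.rpow_nonneg hx.1.le _)) x)
    (indicator_nonneg (fun _ hx => mul_nonneg hL (Real.rpow_nonneg (hu.trans hx) _)) x)

theorem integrable_radialMajorant_near {γ : ℝ} (hγ : γ < 2) (K : ℝ) {u : ℝ} (hu : 0 < u) :
    Integrable ((Ioo 0 u).indicator fun x => K * x ^ (1 - γ)) := by
  rw [integrable_indicator_iff measurableSet_Ioo]
  exact ((intervalIntegral.integrableOn_Ioo_rpow_iff hu).mpr (by linarith)).const_mul K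

theorem integrable_radialMajorant_far {γ : ℝ} (hγ : 1 < γ) (L : ℝ) {u : ℝ} (hu : 0 < u) :
    Integrable ((Ici u).indicator fun x => L * x ^ (-γ)) := by
  rw [integrable_indicator_iff measurableSet_Ici, integrableOn_Ici_iff_integrableOn_Ioi]
  exact (integrableOn_Ioi_rpow_of_lt (by linarith) hu).const_mul L

theorem integrable_radialMajorant {γ : ℝ} (hγ : γ ∈ Ioo (1 : ℝ) 2) (K L : ℝ) {u : ℝ}
    (hu : 0 < u) : Integrable (radialMajorant γ K L u) :=
  (integrable_radialMajorant_near hγ.2 K hu).add (integrable_radialMajorant_far hγ.1 L hu)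

theorem setIntegral_radialMajorant {γ : ℝ} (hγ : γ ∈ Ioo (1 : ℝ) 2) (K L : ℝ) {u : ℝ}
    (hu : 0 < u) : ∫ x in Ioi 0, radialMajorant γ K L u x =
      K / (2 - γ) * u ^ (2 - γ) + L / (γ - 1) * u ^ (1 - γ) := by
  have hγ2 : 2 - γ ≠ 0 := by linarith [hγ.2]
  unfold radialMajorant
  rw [integral_add (integrable_radialMajorant_near hγ.2 K hu).integrableOn
    (integrable_radialMajorant_far hγ.1 L hu).integrableOn,
    setIntegral_indicator measurableSet_Ioo, setIntegral_indicator measurableSet_Ici,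
    inter_eq_right.mpr Ioo_subset_Ioi_self, inter_eq_right.mpr (Ici_subset_Ioi.mpr hu),
    integral_const_mul, integral_const_mul, integral_Ici_eq_integral_Ioi,
    integral_Ioi_rpow_of_lt (by linarith [hγ.1]) hu, ← integral_Ioc_eq_integral_Ioo,
    ← intervalIntegral.integral_of_le hu.le, integral_rpow (Or.inl (by linarith [hγ.2])),
    show 1 - γ + 1 = 2 - γ by ring, show -γ + 1 = 1 - γ by ring, Real.zero_rpow hγ2,
    sub_zero, show 1 - γ = -(γ - 1) by ring, neg_div_neg_eq]
  ring

/-- The integrand of the regional fractional Laplacian on `(0, ∞)`, compensated by the linear part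
of `F` on the largest interval of `(0, ∞)` symmetric around `u`. -/
noncomputable def compensatedKernel (γ : ℝ) (F : ℝ → ℝ) (u v : ℝ) : ℝ :=
  (F v - F u - if |v - u| < u then deriv F u * (v - u) else 0) / |u - v| ^ (γ + 1)

theorem measurable_compensatedKernel (γ : ℝ) {F : ℝ → ℝ} (hF : Continuous F) (u : ℝ) :
    Measurable (compensatedKernel γ F u) := by
  have := hF.measurable
  unfold compensatedKernel
  refine Measurable.div (Measurable.sub (by fun_prop) (Measurable.ite ?_ (by fun_prop)
    (by fun_prop))) (by fun_prop)
  exact measurableSet_lt (by fun_prop) (by fun_prop)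

theorem abs_compensatedKernel_le (γ : ℝ) {F : ℝ → ℝ} (hF : Differentiable ℝ F) {K L : NNReal}
    (hL : LipschitzWith L F) (hK : LipschitzWith K (deriv F)) {u : ℝ} (hu : 0 < u) (v : ℝ) :
    |compensatedKernel γ F u v| ≤ radialMajorant γ K L u |v - u| := by
  rcases eq_or_ne v u with rfl | hne
  · simpa [compensatedKernel] using radialMajorant_nonneg γ K.2 L.2 hu.le 0
  have hx : 0 < |v - u| := abs_pos.mpr (sub_ne_zero.mpr hne)
  have hx' : |u - v| = |v - u| := abs_sub_comm u v
  have hlip : |F v - F u| ≤ L * |v - u| := by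
    simpa [Real.dist_eq] using hL.dist_le_mul v u
  unfold compensatedKernel radialMajorant
  rw [abs_div, hx', abs_of_pos (Real.rpow_pos_of_pos hx _),
    div_le_iff₀ (Real.rpow_pos_of_pos hx _)]
  rcases lt_or_ge |v - u| u with h | h
  · rw [if_pos h, indicator_of_mem (show |v - u| ∈ Ioo 0 u from ⟨hx, h⟩),
      indicator_of_notMem (show |v - u| ∉ Ici u from not_le.mpr h), add_zero, mul_assoc,
      ← Real.rpow_add hx, show 1 - γ + (γ + 1) = (2 : ℕ) by push_cast; ring, Real.rpow_natCast]
    exact abs_taylor_remainder_le hF hK u v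
  · rw [if_neg (not_lt.mpr h), sub_zero,
      indicator_of_notMem (show |v - u| ∉ Ioo 0 u from fun h' => not_lt.mpr h h'.2),
      indicator_of_mem (show |v - u| ∈ Ici u from h), zero_add, mul_assoc,
      ← Real.rpow_add hx, show -γ + (γ + 1) = 1 by ring, Real.rpow_one]
    exact hlip

/-- The linear compensation has zero mean on symmetric annuli. -/
theorem integral_odd_annulus_eq_zero (γ ε u : ℝ) :
    ∫ w : ℝ, {w : ℝ | ε ≤ |w| ∧ |w| < u}.indicator (fun w => w / |w| ^ (γ + 1)) w = 0 := by
  set o := {w : ℝ | ε ≤ |w| ∧ |w| < u}.indicator (fun w : ℝ => w / |w| ^ (γ + 1)) with ho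
  have hodd : ∀ w, o (-w) = -o w := fun w => by
    simp only [ho, indicator_apply, mem_ofPred_eq, abs_neg]
    split_ifs <;> ring
  have h := integral_neg_eq_self o volume
  simp only [hodd, integral_neg] at h
  linarith

theorem integrable_odd_annulus {γ ε u : ℝ} (hγ : -1 ≤ γ) (hε : 0 < ε) :
    Integrable ({w : ℝ | ε ≤ |w| ∧ |w| < u}.indicator fun w : ℝ => w / |w| ^ (γ + 1)) := by
  have hmeas : MeasurableSet {w : ℝ | ε ≤ |w| ∧ |w| < u} :=
    MeasurableSet.inter (s₁ := {w : ℝ | ε ≤ |w|}) (s₂ := {w : ℝ | |w| < u})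
      (measurableSet_le (by fun_prop) (by fun_prop)) (measurableSet_lt (by fun_prop) (by fun_prop))
  rw [integrable_indicator_iff hmeas]
  have hsub : {w : ℝ | ε ≤ |w| ∧ |w| < u} ⊆ Ioo (-u) u := fun w hw => abs_lt.mp hw.2
  have hfin : volume {w : ℝ | ε ≤ |w| ∧ |w| < u} < ⊤ :=
    (measure_mono hsub).trans_lt measure_Ioo_lt_top
  refine Measure.integrableOn_of_bounded (M := u / ε ^ (γ + 1)) hfin.ne
    (Measurable.aestronglyMeasurable (by fun_prop)) ?_
  refine (ae_restrict_iff' hmeas).mpr (.of_forall fun w hw => ?_)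
  rw [norm_div, Real.norm_eq_abs, Real.norm_of_nonneg (by positivity)]
  exact div_le_div₀ ((abs_nonneg w).trans hw.2.le) hw.2.le (Real.rpow_pos_of_pos hε _)
    (Real.rpow_le_rpow hε.le hw.1 (by linarith))

theorem integrableOn_compensatedKernel {γ : ℝ} (hγ : γ ∈ Ioo (1 : ℝ) 2) {F : ℝ → ℝ}
    (hF : Differentiable ℝ F) {K L : NNReal} (hL : LipschitzWith L F)
    (hK : LipschitzWith K (deriv F)) {u : ℝ} (hu : 0 < u) :
    IntegrableOn (compensatedKernel γ F u) (Ioi 0) := by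
  refine Integrable.mono' ((integrable_comp_abs_of_integrableOn_Ioi
    (integrable_radialMajorant hγ K L hu).integrableOn).comp_sub_right u).integrableOn
    (measurable_compensatedKernel γ hF.continuous u).aestronglyMeasurable ?_
  exact .of_forall (abs_compensatedKernel_le γ hF hL hK hu)

theorem measurableSet_truncation (ε u : ℝ) :
    MeasurableSet (Ioi (0 : ℝ) ∩ {v : ℝ | ε ≤ |u - v|}) :=
  measurableSet_Ioi.inter (measurableSet_le (by fun_prop) (by fun_prop))

theorem regFracLapTrunc_eq_compensated {γ : ℝ} (c : ℝ) (hγ : γ ∈ Ioo (1 : ℝ) 2) {F : ℝ → ℝ}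
    (hF : Differentiable ℝ F) {K L : NNReal} (hL : LipschitzWith L F)
    (hK : LipschitzWith K (deriv F)) {u ε : ℝ} (hu : 0 < u) (hε : 0 < ε) :
    regFracLapTrunc c γ (Ioi 0) F ε u =
      c * ∫ v in Ioi 0 ∩ {v : ℝ | ε ≤ |u - v|}, compensatedKernel γ F u v := by
  set o := {w : ℝ | ε ≤ |w| ∧ |w| < u}.indicator (fun w : ℝ => w / |w| ^ (γ + 1)) with ho
  have hoint : Integrable fun v => o (v - u) :=
    (integrable_odd_annulus (by linarith [hγ.1]) hε).comp_sub_right u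
  have hzero : ∫ v in Ioi 0 ∩ {v : ℝ | ε ≤ |u - v|}, o (v - u) = 0 := by
    rw [setIntegral_eq_integral_of_forall_compl_eq_zero, integral_sub_right_eq_self o u]
    · exact integral_odd_annulus_eq_zero γ ε u
    · intro v hv
      refine indicator_of_notMem (fun hw => hv ⟨?_, ?_⟩) _
      · have := (abs_lt.mp hw.2).1
        exact mem_Ioi.mpr (by linarith)
      · have := hw.1
        rwa [abs_sub_comm] at this
  have hsplit : ∀ v ∈ Ioi 0 ∩ {v : ℝ | ε ≤ |u - v|}, (F v - F u) / |u - v| ^ (γ + 1) =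
      compensatedKernel γ F u v + deriv F u * o (v - u) := by
    intro v hv
    have hv' : ε ≤ |v - u| := by rw [abs_sub_comm]; exact hv.2
    simp only [compensatedKernel, ho, indicator_apply, mem_ofPred_eq, hv', true_and,
      abs_sub_comm u v]
    split_ifs <;> ring
  rw [regFracLapTrunc, setIntegral_congr_fun (measurableSet_truncation ε u) hsplit,
    integral_add ((integrableOn_compensatedKernel hγ hF hL hK hu).mono_set inter_subset_left)
      (hoint.const_mul _).integrableOn, integral_const_mul, hzero, mul_zero, add_zero]

theorem tendsto_regFracLapTrunc {γ : ℝ} (c : ℝ) (hγ : γ ∈ Ioo (1 : ℝ) 2) {F : ℝ → ℝ}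
    (hF : Differentiable ℝ F) {K L : NNReal} (hL : LipschitzWith L F)
    (hK : LipschitzWith K (deriv F)) {u : ℝ} (hu : 0 < u) :
    Tendsto (fun ε => regFracLapTrunc c γ (Ioi 0) F ε u) (𝓝[>] 0)
      (𝓝 (c * ∫ v in Ioi 0, compensatedKernel γ F u v)) := by
  have hint := integrableOn_compensatedKernel hγ hF hL hK hu
  have hlim : Tendsto (fun ε => c * ∫ v in Ioi 0,
      {v : ℝ | ε ≤ |u - v|}.indicator (compensatedKernel γ F u) v) (𝓝[>] 0)
      (𝓝 (c * ∫ v in Ioi 0, compensatedKernel γ F u v)) := by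
    refine Tendsto.const_mul c (tendsto_integral_filter_of_dominated_convergence
      (fun v => ‖compensatedKernel γ F u v‖) ?_ ?_ hint.norm ?_)
    · exact .of_forall fun ε => (hint.indicator
        (measurableSet_le (by fun_prop) (by fun_prop))).aestronglyMeasurable
    · exact .of_forall fun ε => .of_forall fun v => norm_indicator_le_norm_self _ _
    · refine .of_forall fun v => ?_
      rcases eq_or_ne v u with rfl | hne
      · simp [indicator_apply, compensatedKernel]
      · refine tendsto_const_nhds.congr' ?_
        have hpos : 0 < |u - v| := abs_pos.mpr (sub_ne_zero.mpr hne.symm)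
        filter_upwards [Ioo_mem_nhdsGT hpos] with ε hε
        rw [indicator_of_mem]
        exact hε.2.le
  refine hlim.congr' ?_
  filter_upwards [self_mem_nhdsWithin] with ε hε
  rw [regFracLapTrunc_eq_compensated c hγ hF hL hK hu hε,
    setIntegral_indicator (measurableSet_le (by fun_prop) (by fun_prop))]

theorem abs_regFracLapTrunc_le {γ c : ℝ} (hc : 0 < c) (hγ : γ ∈ Ioo (1 : ℝ) 2) {F : ℝ → ℝ}
    (hF : Differentiable ℝ F) {K L : NNReal} (hL : LipschitzWith L F)
    (hK : LipschitzWith K (deriv F)) {u ε : ℝ} (hu : 0 < u) (hε : 0 < ε) :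
    |regFracLapTrunc c γ (Ioi 0) F ε u| ≤
      c * (2 * (K / (2 - γ) * u ^ (2 - γ) + L / (γ - 1) * u ^ (1 - γ))) := by
  rw [regFracLapTrunc_eq_compensated c hγ hF hL hK hu hε, abs_mul, abs_of_pos hc,
    ← setIntegral_radialMajorant hγ K L hu, ← integral_comp_abs (f := radialMajorant γ K L u),
    ← integral_sub_right_eq_self (fun x => radialMajorant γ K L u |x|) u,
    ← integral_indicator (measurableSet_truncation ε u), ← Real.norm_eq_abs]
  refine mul_le_mul_of_nonneg_left (norm_integral_le_of_norm_le
    ((integrable_comp_abs_of_integrableOn_Ioi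
      (integrable_radialMajorant hγ K L hu).integrableOn).comp_sub_right u)
    (.of_forall fun v => ?_)) hc.le
  by_cases hv : v ∈ Ioi 0 ∩ {v : ℝ | ε ≤ |u - v|}
  · rw [indicator_of_mem hv]
    exact abs_compensatedKernel_le γ hF hL hK hu v
  · rw [indicator_of_notMem hv, norm_zero]
    exact radialMajorant_nonneg γ K.2 L.2 hu.le _

/-- Decay of the truncated regional fractional Laplacian far from the support. -/
theorem abs_regFracLapTrunc_le_of_far {γ c : ℝ} (hc : 0 < c) (hγ : -1 ≤ γ) {F : ℝ → ℝ} {M b : ℝ}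
    (hb : 0 < b) (hM : ∀ v, |F v| ≤ M) (hFb : ∀ v, b ≤ v → F v = 0) {u : ℝ} (hu : 2 * b ≤ u)
    (ε : ℝ) :
    |regFracLapTrunc c γ (Ioi 0) F ε u| ≤ c * (b * (M / (u / 2) ^ (γ + 1))) := by
  have hM0 : 0 ≤ M := (abs_nonneg _).trans (hM 0)
  have hu2 : 0 < u / 2 := by linarith
  have hint : Integrable ((Ioo 0 b).indicator fun _ : ℝ => M / (u / 2) ^ (γ + 1)) := by
    rw [integrable_indicator_iff measurableSet_Ioo]
    exact integrableOn_const measure_Ioo_lt_top.ne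
  have hval : ∫ v, (Ioo 0 b).indicator (fun _ : ℝ => M / (u / 2) ^ (γ + 1)) v =
      b * (M / (u / 2) ^ (γ + 1)) := by
    rw [integral_indicator measurableSet_Ioo, setIntegral_const]
    simp [hb.le]
  rw [regFracLapTrunc, abs_mul, abs_of_pos hc, ← hval,
    ← integral_indicator (measurableSet_truncation ε u), ← Real.norm_eq_abs]
  refine mul_le_mul_of_nonneg_left (norm_integral_le_of_norm_le hint
    (.of_forall fun v => ?_)) hc.le
  have hnonneg : 0 ≤ (Ioo 0 b).indicator (fun _ : ℝ => M / (u / 2) ^ (γ + 1)) v :=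
    indicator_nonneg (fun _ _ => by positivity) _
  by_cases hv : v ∈ Ioi 0 ∩ {v : ℝ | ε ≤ |u - v|}
  · rw [indicator_of_mem hv, hFb u (by linarith), sub_zero]
    rcases lt_or_ge v b with hvb | hvb
    · rw [indicator_of_mem (show v ∈ Ioo 0 b from ⟨hv.1, hvb⟩), norm_div, Real.norm_eq_abs,
        Real.norm_of_nonneg (by positivity)]
      refine div_le_div₀ hM0 (hM v) (Real.rpow_pos_of_pos hu2 _)
        (Real.rpow_le_rpow hu2.le ?_ (by linarith))
      exact le_trans (by linarith) (le_abs_self _)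
    · simpa [hFb v hvb] using hnonneg
  · rw [indicator_of_notMem hv, norm_zero]
    exact hnonneg

/-- Existence of the regional fractional Laplacian on `(0, ∞)` and an integrable bound for its
truncations. -/
theorem regFracLapTrunc_Ioi {γ c : ℝ} (hγ : γ ∈ Ioo (1 : ℝ) 2) (hc : 0 < c) {F : ℝ → ℝ}
    (hF : ContDiff ℝ 2 F) (hFc : HasCompactSupport F) {b : ℝ} (hb : 0 < b)
    (hFb : ∀ v, b ≤ v → F v = 0) :
    (∀ u ∈ Ioi (0 : ℝ), ∃ l : ℝ,
      Tendsto (fun ε => regFracLapTrunc c γ (Ioi 0) F ε u) (𝓝[>] 0) (𝓝 l)) ∧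
    ∃ H : ℝ → ℝ, IntegrableOn H (Ioi 0) ∧
      ∀ u ∈ Ioi (0 : ℝ), ∀ ε > 0, |regFracLapTrunc c γ (Ioi 0) F ε u| ≤ H u := by
  have hdiff : Differentiable ℝ F := hF.differentiable (by norm_num)
  obtain ⟨L, hL⟩ := ContDiff.lipschitzWith_of_hasCompactSupport hFc hF (by norm_num)
  have hF' : ContDiff ℝ 1 (deriv F) :=
    ContDiff.deriv' (n := 1) (by simpa [one_add_one_eq_two] using hF)
  obtain ⟨K, hK⟩ := ContDiff.lipschitzWith_of_hasCompactSupport hFc.deriv hF' (by norm_num)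
  obtain ⟨M, hM⟩ := hFc.exists_bound_of_continuous hF.continuous
  refine ⟨fun u hu => ⟨_, tendsto_regFracLapTrunc c hγ hdiff hL hK hu⟩,
    fun u => if u < 2 * b then c * (2 * (K / (2 - γ) * u ^ (2 - γ) + L / (γ - 1) * u ^ (1 - γ)))
      else c * (b * (M / (u / 2) ^ (γ + 1))), ?_, fun u hu ε hε => ?_⟩
  · have hb2 : 0 < 2 * b := by linarith
    rw [← Ioo_union_Ici_eq_Ioi hb2]
    refine IntegrableOn.union ?_ ?_
    · have hnear : IntegrableOn (fun u : ℝ => c * (2 * (K / (2 - γ) * u ^ (2 - γ) +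
          L / (γ - 1) * u ^ (1 - γ)))) (Ioo 0 (2 * b)) := by
        refine Integrable.const_mul (Integrable.const_mul (Integrable.add ?_ ?_) _) _
        · exact ((intervalIntegral.integrableOn_Ioo_rpow_iff hb2).mpr
            (by linarith [hγ.2])).const_mul _
        · exact ((intervalIntegral.integrableOn_Ioo_rpow_iff hb2).mpr
            (by linarith [hγ.2])).const_mul _
      exact hnear.congr_fun (fun u hu => (if_pos hu.2).symm) measurableSet_Ioo
    · have hfar : IntegrableOn (fun u : ℝ => c * b * M * 2 ^ (γ + 1) * u ^ (-(γ + 1)))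
          (Ici (2 * b)) :=
        Iff.mpr integrableOn_Ici_iff_integrableOn_Ioi
          ((integrableOn_Ioi_rpow_of_lt (by linarith [hγ.1]) hb2).const_mul _)
      refine hfar.congr_fun (fun u hu => ?_) measurableSet_Ici
      have hu0 : 0 ≤ u := hb2.le.trans hu
      simp only [if_neg (not_lt.mpr (mem_Ici.mp hu))]
      rw [Real.div_rpow hu0 zero_le_two, Real.rpow_neg hu0, div_div_eq_mul_div]
      ring
  · beta_reduce
    split_ifs with h
    · exact abs_regFracLapTrunc_le hc hγ hdiff hL hK hu hε
    · exact abs_regFracLapTrunc_le_of_far hc (by linarith [hγ.1]) hb hM hFb (not_lt.mp h) ε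

theorem regFracLapTrunc_congr (c γ ε : ℝ) {I : Set ℝ} (hI : MeasurableSet I) {F G : ℝ → ℝ}
    (h : EqOn F G I) {u : ℝ} (hu : u ∈ I) :
    regFracLapTrunc c γ I F ε u = regFracLapTrunc c γ I G ε u := by
  unfold regFracLapTrunc
  congr 1
  refine setIntegral_congr_fun
    (hI.inter (measurableSet_le (by fun_prop) (by fun_prop))) fun v hv => ?_
  simp only [h hv.1, h hu]

theorem regFracLapTrunc_Iio_eq (c γ : ℝ) (G : ℝ → ℝ) (ε u : ℝ) :
    regFracLapTrunc c γ (Iio 0) G ε u =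
      regFracLapTrunc c γ (Ioi 0) (fun v => G (-v)) ε (-u) := by
  unfold regFracLapTrunc
  congr 1
  rw [← integral_indicator (measurableSet_truncation ε (-u)), ← integral_neg_eq_self _ volume,
    ← integral_indicator (measurableSet_Iio.inter (measurableSet_le (by fun_prop) (by fun_prop)))]
  congr 1
  ext v
  have h : |-u + v| = |u - v| := by rw [← abs_neg]; congr 1; ring
  simp [indicator_apply, h]

theorem stmt1 (γ c : ℝ) (hγ : γ ∈ Set.Ioo (1 : ℝ) 2) (hc : 0 < c)
    (hprob : HasSum (transP c γ) 1)
    (I : Set ℝ) (hI : I = Set.Iio (0 : ℝ) ∨ I = Set.Ioi (0 : ℝ))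
    (G : ℝ → ℝ) (hG : CcTwoStar G)
    (bG : ℝ) (hbG : 0 < bG) (hGb : ∀ u : ℝ, bG ≤ |u| → G u = 0) :
    (∀ u ∈ I, ∃ L : ℝ,
        Tendsto (fun ε => regFracLapTrunc c γ I G ε u) (𝓝[>] (0 : ℝ)) (𝓝 L)) ∧
    ∃ H : ℝ → ℝ, IntegrableOn H I ∧
      ∀ u ∈ I, ∀ ε ∈ Set.Ioo (0 : ℝ) bG, |regFracLapTrunc c γ I G ε u| ≤ H u := by
  obtain ⟨Gm, Gp, hGm, hGmc, hGp, hGpc, hGeq⟩ := hG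
  rcases hI with rfl | rfl
  · have hcd : ContDiff ℝ 2 fun v => Gm (-v) := hGm.comp contDiff_neg
    have hcs : HasCompactSupport fun v => Gm (-v) := hGmc.comp_homeomorph (Homeomorph.neg ℝ)
    obtain ⟨hlim, H, hH, hbound⟩ := regFracLapTrunc_Ioi hγ hc hcd hcs hbG fun v hv => by
      have hv0 : -v < 0 := by linarith
      have h := hGb (-v) (by rw [abs_neg]; exact hv.trans (le_abs_self v))
      rwa [hGeq, if_pos hv0] at h
    have heq : ∀ u ∈ Iio (0 : ℝ), ∀ ε, regFracLapTrunc c γ (Iio 0) G ε u =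
        regFracLapTrunc c γ (Ioi 0) (fun v => Gm (-v)) ε (-u) := fun u hu ε => by
      rw [← regFracLapTrunc_Iio_eq]
      exact regFracLapTrunc_congr c γ ε measurableSet_Iio
        (fun v hv => by rw [hGeq, if_pos (mem_Iio.mp hv)]) hu
    refine ⟨fun u hu => ?_, fun u => H (-u), ?_, fun u hu ε hε => ?_⟩
    · simp only [heq u hu]
      exact hlim (-u) (mem_Ioi.mpr (neg_pos.mpr hu))
    · simpa using hH.comp_neg
    · rw [heq u hu]
      exact hbound (-u) (mem_Ioi.mpr (neg_pos.mpr hu)) ε hε.1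
  · obtain ⟨hlim, H, hH, hbound⟩ := regFracLapTrunc_Ioi hγ hc hGp hGpc hbG fun v hv => by
      have h := hGb v (hv.trans (le_abs_self v))
      rwa [hGeq, if_neg (by linarith)] at h
    have heq : ∀ u ∈ Ioi (0 : ℝ), ∀ ε, regFracLapTrunc c γ (Ioi 0) G ε u =
        regFracLapTrunc c γ (Ioi 0) Gp ε u := fun u hu ε =>
      regFracLapTrunc_congr c γ ε measurableSet_Ioi
        (fun v hv => by rw [hGeq, if_neg (mem_Ioi.mp hv).not_gt]) hu
    refine ⟨fun u hu => ?_, H, hH, fun u hu ε hε => ?_⟩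
    · simp only [heq u hu]
      exact hlim u hu
    · rw [heq u hu]
      exact hbound u hu ε hε.1
end

section
/- Let γ ∈ (0,1], let I = (−∞,0) or I = (0,∞), and let G ∈ C_{c0}^2(ℝ), with b_G > 0 such that G(u) = 0 whenever |u| ≥ b_G. Then for every u ∈ I the limit lim_{ε→0⁺} [−(−Δ)_I^{γ/2}G]_ε(u) exists, and there exists H ∈ L¹(I) such that |[−(−Δ)_I^{γ/2}G]_ε(u)| ≤ H(u) for every u ∈ I and every ε ∈ (0, b_G). -/
open MeasureTheory Filter Set Topology

/-- `G ∈ C_{c0}^2(ℝ)`: twice continuously differentiable, vanishing both near the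
origin and outside a compact set. -/
def CcZeroTwo (G : ℝ → ℝ) : Prop :=
  ContDiff ℝ 2 G ∧ ∃ bbar b : ℝ, 0 < bbar ∧ bbar < b ∧
    (∀ u : ℝ, |u| ≤ bbar → G u = 0) ∧ (∀ u : ℝ, b ≤ |u| → G u = 0)

/-- A power that is cut off near the origin is dominated by the Japanese bracket. -/
theorem inv_abs_rpow_le_one_add_norm {δ s z : ℝ} (hδ : 0 < δ) (hs : 0 ≤ s) (hz : δ ≤ |z|) :
    (|z| ^ s)⁻¹ ≤ ((1 + δ) / δ) ^ s * (1 + ‖z‖) ^ (-s) := by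
  have hz0 : 0 < |z| := hδ.trans_le hz
  have hle : (1 + |z|) ≤ (1 + δ) / δ * |z| := by
    rw [div_mul_eq_mul_div, le_div_iff₀ hδ]
    nlinarith
  have hpow : (1 + |z|) ^ s ≤ ((1 + δ) / δ) ^ s * |z| ^ s := by
    rw [← Real.mul_rpow (by positivity) hz0.le]
    exact Real.rpow_le_rpow (by positivity) hle hs
  rw [Real.norm_eq_abs, Real.rpow_neg (by positivity), ← div_eq_mul_inv, inv_eq_one_div,
    div_le_div_iff₀ (by positivity) (by positivity)]
  linarith

/-- First-order Taylor bound for a function whose derivative is Lipschitz. -/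
theorem abs_sub_sub_deriv_mul_le {G : ℝ → ℝ} {C : NNReal} (hG : Differentiable ℝ G)
    (hC : LipschitzWith C (deriv G)) (u v : ℝ) :
    |G v - G u - deriv G u * (v - u)| ≤ C * (v - u) ^ 2 := by
  have hder : ∀ x ∈ uIcc u v,
      HasDerivWithinAt (fun x => G x - deriv G u * x) (deriv G x - deriv G u) (uIcc u v) x := by
    intro x _
    have h := (hG x).hasDerivAt.fun_sub ((hasDerivAt_id x).const_mul (deriv G u))
    rw [mul_one] at h
    exact h.hasDerivWithinAt
  have hbound : ∀ x ∈ uIcc u v, ‖deriv G x - deriv G u‖ ≤ C * |v - u| := by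
    intro x hx
    have h := hC.dist_le_mul x u
    rw [Real.dist_eq, Real.dist_eq] at h
    exact h.trans (mul_le_mul_of_nonneg_left (abs_sub_left_of_mem_uIcc hx) C.2)
  have h := (convex_uIcc u v).norm_image_sub_le_of_norm_hasDerivWithin_le hder hbound
    left_mem_uIcc right_mem_uIcc
  rw [Real.norm_eq_abs, Real.norm_eq_abs, mul_assoc, abs_mul_abs_self] at h
  calc |G v - G u - deriv G u * (v - u)|
      = |G v - deriv G u * v - (G u - deriv G u * u)| := by congr 1; ring
    _ ≤ C * ((v - u) * (v - u)) := h
    _ = C * (v - u) ^ 2 := by ring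

/-- The odd truncated kernel `z ↦ z / |z| ^ s` on `ε ≤ |z| < δ`. -/
noncomputable def oddTruncKernel (ε δ s : ℝ) : ℝ → ℝ :=
  {z : ℝ | ε ≤ |z| ∧ |z| < δ}.indicator fun z => z / |z| ^ s

theorem integral_oddTruncKernel_sub (ε δ s u : ℝ) :
    ∫ v, oddTruncKernel ε δ s (v - u) = 0 := by
  rw [integral_sub_right_eq_self (oddTruncKernel ε δ s) u]
  have hodd : ∀ z, oddTruncKernel ε δ s (-z) = -oddTruncKernel ε δ s z := by
    intro z
    simp only [oddTruncKernel, indicator_apply, mem_ofPred_eq, abs_neg]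
    split_ifs <;> simp [neg_div]
  have h := integral_neg_eq_self (oddTruncKernel ε δ s) volume
  simp only [hodd, integral_neg] at h
  linarith

theorem measurableSet_truncAnnulus (ε δ : ℝ) : MeasurableSet {z : ℝ | ε ≤ |z| ∧ |z| < δ} :=
  (measurableSet_le measurable_const measurable_norm).inter
    (measurableSet_lt measurable_norm measurable_const)

theorem integrable_oddTruncKernel {ε δ s : ℝ} (hε : 0 < ε) (hs : 0 ≤ s) :
    Integrable (oddTruncKernel ε δ s) := by
  have hfin : volume {z : ℝ | ε ≤ |z| ∧ |z| < δ} ≠ ⊤ := by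
    refine ((measure_mono ?_).trans_lt (measure_ball_lt_top (x := (0 : ℝ)) (r := δ))).ne
    intro z hz
    simpa using hz.2
  refine (integrable_indicator_iff (measurableSet_truncAnnulus ε δ)).2 ?_
  refine Measure.integrableOn_of_bounded (M := δ / ε ^ s) hfin
    (by fun_prop : Measurable fun z : ℝ => z / |z| ^ s).aestronglyMeasurable ?_
  refine (ae_restrict_iff' (measurableSet_truncAnnulus ε δ)).2 (Eventually.of_forall ?_)
  rintro z ⟨h1, h2⟩
  rw [Real.norm_eq_abs, abs_div, abs_of_nonneg (Real.rpow_nonneg (abs_nonneg z) s)]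
  have : 0 < δ := (abs_nonneg z).trans_lt h2
  gcongr

/-- The difference quotient with its first-order part removed at distance less than `δ`. -/
noncomputable def compensatedQuotient (γ δ : ℝ) (G : ℝ → ℝ) (u v : ℝ) : ℝ :=
  (G v - G u - (Metric.ball (0 : ℝ) δ).indicator (fun z => deriv G u * z) (v - u)) /
    |u - v| ^ (γ + 1)

/-- An integrable majorant of `compensatedQuotient`. -/
noncomputable def quotientMajorant (γ δ C M : ℝ) (z : ℝ) : ℝ :=
  (Metric.ball (0 : ℝ) δ).indicator (fun _ => C) z +
    2 * M * (((1 + δ) / δ) ^ (γ + 1) * (1 + ‖z‖) ^ (-(γ + 1)))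

theorem integrable_one_add_norm_rpow {γ : ℝ} (hγ : 0 < γ) :
    Integrable fun z : ℝ => (1 + ‖z‖) ^ (-(γ + 1)) :=
  integrable_one_add_norm (by simpa using hγ)

theorem integrable_quotientMajorant {γ : ℝ} (δ C M : ℝ) (hγ : 0 < γ) :
    Integrable (quotientMajorant γ δ C M) := by
  refine Integrable.add ?_ (((integrable_one_add_norm_rpow hγ).const_mul _).const_mul _)
  exact (integrable_indicator_iff Metric.isOpen_ball.measurableSet).2
    (integrableOn_const measure_ball_lt_top.ne)

theorem abs_compensatedQuotient_le {γ δ M : ℝ} {C : NNReal} {G : ℝ → ℝ}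
    (hγ : γ ∈ Ioc (0 : ℝ) 1) (hδ : 0 < δ) (hδ1 : δ ≤ 1) (hG : Differentiable ℝ G)
    (hC : LipschitzWith C (deriv G)) (hM : ∀ x, |G x| ≤ M) (u v : ℝ) :
    |compensatedQuotient γ δ G u v| ≤ quotientMajorant γ δ C M (v - u) := by
  have hM0 : 0 ≤ M := (abs_nonneg _).trans (hM 0)
  have hs : 0 ≤ γ + 1 := by linarith [hγ.1]
  have hfar : 0 ≤ 2 * M * (((1 + δ) / δ) ^ (γ + 1) * (1 + ‖v - u‖) ^ (-(γ + 1))) := by positivity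
  rw [compensatedQuotient, quotientMajorant, abs_div, abs_sub_comm u v,
    abs_of_nonneg (Real.rpow_nonneg (abs_nonneg (v - u)) _)]
  by_cases hz : |v - u| < δ
  · have hmem : v - u ∈ Metric.ball (0 : ℝ) δ := by simpa using hz
    rw [indicator_of_mem hmem, indicator_of_mem hmem]
    refine le_add_of_le_of_nonneg (div_le_of_le_mul₀ (by positivity) C.2 ?_) hfar
    refine (abs_sub_sub_deriv_mul_le hG hC u v).trans (mul_le_mul_of_nonneg_left ?_ C.2)
    rcases eq_or_ne v u with rfl | hne
    · simpa using Real.rpow_nonneg le_rfl _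
    · have h := Real.rpow_le_rpow_of_exponent_ge (abs_pos.2 (sub_ne_zero.2 hne))
        (hz.le.trans hδ1) (by linarith [hγ.2] : γ + 1 ≤ 2)
      rwa [Real.rpow_two, sq_abs] at h
  · have hmem : v - u ∉ Metric.ball (0 : ℝ) δ := by simpa using hz
    rw [indicator_of_notMem hmem, indicator_of_notMem hmem, sub_zero, zero_add, div_eq_mul_inv]
    refine mul_le_mul ?_ (inv_abs_rpow_le_one_add_norm hδ hs (not_lt.1 hz)) (by positivity)
      (by positivity)
    linarith [abs_sub (G v) (G u), hM v, hM u]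

theorem integrable_compensatedQuotient {γ δ M : ℝ} {C : NNReal} {G : ℝ → ℝ}
    (hγ : γ ∈ Ioc (0 : ℝ) 1) (hδ : 0 < δ) (hδ1 : δ ≤ 1) (hG : Differentiable ℝ G)
    (hC : LipschitzWith C (deriv G)) (hM : ∀ x, |G x| ≤ M) (u : ℝ) :
    Integrable (compensatedQuotient γ δ G u) := by
  have hGm : Measurable G := hG.continuous.measurable
  refine ((integrable_quotientMajorant δ C M hγ.1).comp_sub_right u).mono' ?_
    (Eventually.of_forall (abs_compensatedQuotient_le hγ hδ hδ1 hG hC hM u))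
  have hind : Measurable ((Metric.ball (0 : ℝ) δ).indicator fun z => deriv G u * z) :=
    (by fun_prop : Measurable fun z => deriv G u * z).indicator Metric.isOpen_ball.measurableSet
  exact (((hGm.sub_const _).sub (hind.comp (measurable_id.sub_const u))).div
    (by fun_prop : Measurable fun v => |u - v| ^ (γ + 1))).aestronglyMeasurable

/-- By symmetry the first-order compensation does not change the truncated integral, provided
the compensated neighbourhood lies in `I` or the derivative vanishes. -/
theorem regFracLapTrunc_eq_compensated_s2 {γ c δ M ε u : ℝ} {C : NNReal} {G : ℝ → ℝ} {I : Set ℝ}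
    (hγ : γ ∈ Ioc (0 : ℝ) 1) (hδ : 0 < δ) (hδ1 : δ ≤ 1) (hG : Differentiable ℝ G)
    (hC : LipschitzWith C (deriv G)) (hM : ∀ x, |G x| ≤ M) (hI : MeasurableSet I)
    (hu : deriv G u = 0 ∨ ∀ v, |v - u| < δ → v ∈ I) (hε : 0 < ε) :
    regFracLapTrunc c γ I G ε u =
      c * ∫ v in I, {v : ℝ | ε ≤ |u - v|}.indicator (compensatedQuotient γ δ G u) v := by
  have hA : MeasurableSet {v : ℝ | ε ≤ |u - v|} :=
    measurableSet_le measurable_const (by fun_prop)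
  have hint := integrable_compensatedQuotient hγ hδ hδ1 hG hC hM u
  have hodd : Integrable fun v => deriv G u * oddTruncKernel ε δ (γ + 1) (v - u) :=
    ((integrable_oddTruncKernel hε (by linarith [hγ.1])).comp_sub_right u).const_mul _
  have hzero : ∫ v in I ∩ {v : ℝ | ε ≤ |u - v|},
      deriv G u * oddTruncKernel ε δ (γ + 1) (v - u) = 0 := by
    rw [integral_const_mul]
    rcases hu with hu | hu
    · rw [hu, zero_mul]
    · rw [setIntegral_eq_integral_of_forall_compl_eq_zero, integral_oddTruncKernel_sub, mul_zero]
      intro v hv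
      refine indicator_of_notMem (fun h => hv ⟨hu v h.2, ?_⟩) _
      simpa [abs_sub_comm u v] using h.1
  rw [regFracLapTrunc, setIntegral_indicator hA]
  congr 1
  rw [← add_zero (∫ v in I ∩ {v : ℝ | ε ≤ |u - v|}, compensatedQuotient γ δ G u v), ← hzero,
    ← integral_add hint.integrableOn hodd.integrableOn]
  refine setIntegral_congr_fun (hI.inter hA) fun v hv => ?_
  have hv2 : ε ≤ |v - u| := by rw [abs_sub_comm]; exact hv.2
  by_cases hz : |v - u| < δ
  · have hball : v - u ∈ Metric.ball (0 : ℝ) δ := by simpa using hz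
    have hmem : v - u ∈ {z : ℝ | ε ≤ |z| ∧ |z| < δ} := ⟨hv2, hz⟩
    simp only [compensatedQuotient, oddTruncKernel, indicator_of_mem hball,
      indicator_of_mem hmem, abs_sub_comm u v]
    ring
  · simp [compensatedQuotient, oddTruncKernel, hz]

/-- Uniform bound on the truncated operator. -/
theorem abs_regFracLapTrunc_le_s2 {γ c δ M ε u : ℝ} {C : NNReal} {G : ℝ → ℝ} {I : Set ℝ}
    (hγ : γ ∈ Ioc (0 : ℝ) 1) (hc : 0 ≤ c) (hδ : 0 < δ) (hδ1 : δ ≤ 1) (hG : Differentiable ℝ G)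
    (hC : LipschitzWith C (deriv G)) (hM : ∀ x, |G x| ≤ M) (hI : MeasurableSet I)
    (hu : deriv G u = 0 ∨ ∀ v, |v - u| < δ → v ∈ I) (hε : 0 < ε) :
    |regFracLapTrunc c γ I G ε u| ≤ c * ∫ z, quotientMajorant γ δ C M z := by
  have hle := abs_compensatedQuotient_le hγ hδ hδ1 hG hC hM u
  have hmaj := (integrable_quotientMajorant δ C M hγ.1).comp_sub_right u
  rw [regFracLapTrunc_eq_compensated_s2 hγ hδ hδ1 hG hC hM hI hu hε, abs_mul, abs_of_nonneg hc,
    ← integral_sub_right_eq_self (quotientMajorant γ δ C M) u]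
  refine mul_le_mul_of_nonneg_left ?_ hc
  rw [← Real.norm_eq_abs]
  refine le_trans (norm_integral_le_of_norm_le hmaj.integrableOn (Eventually.of_forall fun v => ?_))
    (setIntegral_le_integral hmaj (Eventually.of_forall fun v => (abs_nonneg _).trans (hle v)))
  exact (norm_indicator_le_norm_self _ _).trans (hle v)

theorem tendsto_regFracLapTrunc_s2 {γ c δ M u : ℝ} {C : NNReal} {G : ℝ → ℝ} {I : Set ℝ}
    (hγ : γ ∈ Ioc (0 : ℝ) 1) (hδ : 0 < δ) (hδ1 : δ ≤ 1) (hG : Differentiable ℝ G)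
    (hC : LipschitzWith C (deriv G)) (hM : ∀ x, |G x| ≤ M) (hI : MeasurableSet I)
    (hu : deriv G u = 0 ∨ ∀ v, |v - u| < δ → v ∈ I) :
    Tendsto (fun ε => regFracLapTrunc c γ I G ε u) (𝓝[>] (0 : ℝ))
      (𝓝 (c * ∫ v in I, compensatedQuotient γ δ G u v)) := by
  have hint := integrable_compensatedQuotient hγ hδ hδ1 hG hC hM u
  have heq : (fun ε => c * ∫ v in I,
      {v : ℝ | ε ≤ |u - v|}.indicator (compensatedQuotient γ δ G u) v) =ᶠ[𝓝[>] (0 : ℝ)]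
      fun ε => regFracLapTrunc c γ I G ε u := by
    filter_upwards [self_mem_nhdsWithin] with ε hε
    exact (regFracLapTrunc_eq_compensated_s2 hγ hδ hδ1 hG hC hM hI hu hε).symm
  refine Tendsto.congr' heq (Tendsto.const_mul c ?_)
  refine tendsto_integral_filter_of_dominated_convergence
    (fun v => ‖compensatedQuotient γ δ G u v‖) (Eventually.of_forall fun ε => ?_)
    (Eventually.of_forall fun ε => Eventually.of_forall fun v => norm_indicator_le_norm_self _ _)
    hint.norm.integrableOn (Eventually.of_forall fun v => ?_)
  · exact (hint.aestronglyMeasurable.indicator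
      (measurableSet_le measurable_const (by fun_prop))).restrict
  · rcases eq_or_ne u v with rfl | hne
    · have h0 : compensatedQuotient γ δ G u u = 0 := by
        simp [compensatedQuotient]
      have : ∀ ε : ℝ, {v : ℝ | ε ≤ |u - v|}.indicator (compensatedQuotient γ δ G u) u = 0 := by
        intro ε
        simp [indicator_apply, h0]
      simp only [this, h0, tendsto_const_nhds]
    · have hpos : 0 < |u - v| := abs_pos.2 (sub_ne_zero.2 hne)
      refine tendsto_const_nhds.congr' ?_
      filter_upwards [Ioo_mem_nhdsGT hpos] with ε hε
      exact (indicator_of_mem (show v ∈ {v : ℝ | ε ≤ |u - v|} from hε.2.le) _).symm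

/-- Decay of the truncated operator away from the support of `G`. -/
theorem abs_regFracLapTrunc_le_of_two_mul_le {γ c b ε u : ℝ} {G : ℝ → ℝ} (I : Set ℝ)
    (hγ : 0 < γ) (hc : 0 ≤ c) (hb : 0 < b) (hG : Integrable G)
    (hGb : ∀ x, b ≤ |x| → G x = 0) (hu : 2 * b ≤ |u|) :
    |regFracLapTrunc c γ I G ε u| ≤ c * ((∫ v, |G v|) *
      (((1 + b) / b) ^ (γ + 1) * (1 + ‖u / 2‖) ^ (-(γ + 1)))) := by
  have hu2 : |u / 2| = |u| / 2 := by rw [abs_div, abs_two]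
  have hGu : G u = 0 := hGb u (by linarith)
  rw [regFracLapTrunc, abs_mul, abs_of_nonneg hc, ← integral_mul_const]
  refine mul_le_mul_of_nonneg_left ?_ hc
  have hint := hG.abs.mul_const (((1 + b) / b) ^ (γ + 1) * (1 + ‖u / 2‖) ^ (-(γ + 1)))
  rw [← Real.norm_eq_abs]
  refine le_trans (norm_integral_le_of_norm_le hint.integrableOn (Eventually.of_forall fun v => ?_))
    (setIntegral_le_integral hint (Eventually.of_forall fun v => by positivity))
  by_cases hv : b ≤ |v|
  · simp [hGb v hv, hGu]
  · have hdist : |u / 2| ≤ |u - v| := by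
      linarith [abs_sub_abs_le_abs_sub u v, not_le.1 hv]
    have hpos : 0 < |u / 2| := by linarith
    rw [hGu, sub_zero, Real.norm_eq_abs, abs_div,
      abs_of_nonneg (Real.rpow_nonneg (abs_nonneg (u - v)) _), div_eq_mul_inv]
    refine mul_le_mul_of_nonneg_left (le_trans ?_
      (inv_abs_rpow_le_one_add_norm hb (by linarith : 0 ≤ γ + 1) (by linarith))) (abs_nonneg _)
    gcongr

theorem stmt2 (γ c : ℝ) (hγ : γ ∈ Set.Ioc (0 : ℝ) 1) (hc : 0 < c)
    (hprob : HasSum (transP c γ) 1)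
    (I : Set ℝ) (hI : I = Set.Iio (0 : ℝ) ∨ I = Set.Ioi (0 : ℝ))
    (G : ℝ → ℝ) (hG : CcZeroTwo G)
    (bG : ℝ) (hbG : 0 < bG) (hGb : ∀ u : ℝ, bG ≤ |u| → G u = 0) :
    (∀ u ∈ I, ∃ L : ℝ,
        Tendsto (fun ε => regFracLapTrunc c γ I G ε u) (𝓝[>] (0 : ℝ)) (𝓝 L)) ∧
    ∃ H : ℝ → ℝ, IntegrableOn H I ∧
      ∀ u ∈ I, ∀ ε ∈ Set.Ioo (0 : ℝ) bG, |regFracLapTrunc c γ I G ε u| ≤ H u := by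
  obtain ⟨hG2, bbar, b, hbbar, -, hG0, -⟩ := hG
  have hcs : HasCompactSupport G :=
    HasCompactSupport.intro (isCompact_closedBall (0 : ℝ) bG) fun x hx => hGb x (by
      have : bG < |x| := by simpa using hx
      exact this.le)
  have hdiff : Differentiable ℝ G := hG2.differentiable (by norm_num)
  have hder : ContDiff ℝ 1 (deriv G) := (contDiff_succ_iff_deriv (n := 1)).1 hG2 |>.2.2
  obtain ⟨C, hC⟩ := hder.lipschitzWith_of_hasCompactSupport hcs.deriv one_ne_zero
  obtain ⟨M, hM⟩ := hcs.exists_bound_of_continuous hG2.continuous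
  have hI_meas : MeasurableSet I := by
    rcases hI with rfl | rfl
    exacts [measurableSet_Iio, measurableSet_Ioi]
  obtain ⟨δ, hδ, hδ1, hδb⟩ : ∃ δ : ℝ, 0 < δ ∧ δ ≤ 1 ∧ δ < bbar :=
    ⟨min 1 (bbar / 2), by positivity, min_le_left _ _,
      (min_le_right _ _).trans_lt (half_lt_self hbbar)⟩
  have hlocal : ∀ u ∈ I, deriv G u = 0 ∨ ∀ v, |v - u| < δ → v ∈ I := by
    intro u hu
    rcases lt_or_ge |u| bbar with hub | hub
    · left
      have hloc : G =ᶠ[𝓝 u] fun _ => 0 := by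
        filter_upwards [(isOpen_lt continuous_abs continuous_const).mem_nhds hub] with x hx
        exact hG0 x (le_of_lt hx)
      rw [hloc.deriv_eq, deriv_const]
    · right
      intro v hv
      have hv' := abs_lt.1 hv
      rcases hI with rfl | rfl
      · rw [abs_of_neg hu] at hub
        exact mem_Iio.2 (by linarith)
      · rw [abs_of_pos hu] at hub
        exact mem_Ioi.2 (by linarith)
  refine ⟨fun u hu => ⟨_, tendsto_regFracLapTrunc_s2 hγ hδ hδ1 hdiff hC hM hI_meas (hlocal u hu)⟩,
    fun u => (Metric.ball (0 : ℝ) (2 * bG)).indicator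
      (fun _ => c * ∫ z, quotientMajorant γ δ C M z) u +
      c * ((∫ v, |G v|) * (((1 + bG) / bG) ^ (γ + 1) * (1 + ‖u / 2‖) ^ (-(γ + 1)))), ?_, ?_⟩
  · refine (Integrable.add ?_ ?_).integrableOn
    · exact (integrable_indicator_iff Metric.isOpen_ball.measurableSet).2
        (integrableOn_const measure_ball_lt_top.ne)
    · exact ((((integrable_one_add_norm_rpow hγ.1).comp_div two_ne_zero).const_mul _).const_mul
        _).const_mul _
  · intro u hu ε hε
    beta_reduce
    rcases lt_or_ge |u| (2 * bG) with hub | hub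
    · rw [indicator_of_mem (show u ∈ Metric.ball (0 : ℝ) (2 * bG) by simpa using hub)]
      have hint : 0 ≤ ∫ v, |G v| := integral_nonneg fun v => abs_nonneg _
      exact le_add_of_le_of_nonneg
        (abs_regFracLapTrunc_le_s2 hγ hc.le hδ hδ1 hdiff hC hM hI_meas (hlocal u hu) hε.1)
        (by positivity)
    · rw [indicator_of_notMem (show u ∉ Metric.ball (0 : ℝ) (2 * bG) by simpa using hub), zero_add]
      exact abs_regFracLapTrunc_le_of_two_mul_le I hγ.1 hc.le hbG
        (hG2.continuous.integrable_of_hasCompactSupport hcs) hGb hub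
end

section
/- Let γ ∈ (0,2) and let ρ : ℝ → ℝ be an essentially bounded measurable function such that ∬_{ℝ×ℝ} (ρ(u)−ρ(v))²/|u−v|^{1+γ} du dv < ∞. Then for every G : ℝ → ℝ twice continuously differentiable with compact support, ∫_ℝ ρ(u) [−(−Δ)^{γ/2}G](u) du = −(c_γ/2) ∬_{ℝ×ℝ} (G(u)−G(v))(ρ(u)−ρ(v))/|u−v|^{1+γ} du dv. -/
open MeasureTheory Filter Set Topology

/-- Truncated fractional Laplacian `[−(−Δ)^{γ/2}G]_ε(u)`. -/
noncomputable def fracLapTrunc (c γ : ℝ) (G : ℝ → ℝ) (ε u : ℝ) : ℝ :=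
  c * ∫ v in {v : ℝ | ε ≤ |u - v|}, (G v - G u) / |u - v| ^ (γ + 1)

/-- The weight `min 1 z² / |z|^(1+γ)` is integrable on the real line for `0 < γ < 2`. -/
theorem integrable_min_one_sq_div_abs_rpow {γ : ℝ} (hγ : γ ∈ Set.Ioo (0 : ℝ) 2) :
    Integrable (fun z : ℝ => min 1 (z ^ 2) / |z| ^ (1 + γ)) := by
  obtain ⟨hγ0, hγ2⟩ := hγ
  set g : ℝ → ℝ := fun z => min 1 (z ^ 2) / |z| ^ (1 + γ) with hg
  have near : IntegrableOn g (Ioc 0 1) := by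
    have h : IntegrableOn (fun z : ℝ => z ^ (1 - γ)) (Ioc 0 1) :=
      ((intervalIntegrable_iff_integrableOn_Ioc_of_le zero_le_one).1
        (intervalIntegral.intervalIntegrable_rpow' (by linarith)))
    refine h.congr_fun (fun z hz => ?_) measurableSet_Ioc
    have hz2 : z ^ 2 ≤ 1 := pow_le_one₀ hz.1.le hz.2
    simp only [hg, abs_of_pos hz.1, min_eq_right hz2]
    rw [← Real.rpow_natCast, ← Real.rpow_sub hz.1]
    congr 1
    push_cast
    ring
  have far : IntegrableOn g (Ioi 1) := by
    refine (integrableOn_Ioi_rpow_of_lt (a := -(1 + γ)) (by linarith) one_pos).congr_fun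
      (fun z (hz : 1 < z) => ?_) measurableSet_Ioi
    have hz2 : 1 ≤ z ^ 2 := one_le_pow₀ hz.le
    simp only [hg, abs_of_pos (one_pos.trans hz), min_eq_left hz2]
    rw [Real.rpow_neg (one_pos.trans hz).le, one_div]
  have pos : Integrable ((Ioi 0).indicator g) := by
    rw [integrable_indicator_iff measurableSet_Ioi, ← Ioc_union_Ioi_eq_Ioi zero_le_one]
    exact near.union far
  refine (pos.add pos.comp_neg).congr (ae_of_all _ fun z => ?_)
  rcases lt_trichotomy z 0 with h | h | h
  · simp [indicator, h, h.le, hg]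
  · simp [indicator, h, hg]
  · simp [indicator, h, h.le, hg]

/-- Singular convolution-type kernels: quadratic vanishing on the diagonal together with a bound by
translates of a compactly supported function gives joint integrability against `|z|^(-1-γ)`. -/
theorem integrable_prod_div_abs_rpow {γ : ℝ} (hγ : γ ∈ Set.Ioo (0 : ℝ) 2)
    {H : ℝ × ℝ → ℝ} (hH : Continuous H) {A : ℝ → ℝ} (hA : Continuous A)
    (hAc : HasCompactSupport A) {M : ℝ} (hHM : ∀ u z, |H (u, z)| ≤ M * z ^ 2)
    (hHA : ∀ u z, |H (u, z)| ≤ A u + A (u + z) + A (u - z)) :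
    Integrable (fun q : ℝ × ℝ => H q / |q.2| ^ (1 + γ)) := by
  have hAi : Integrable A := hA.integrable_of_hasCompactSupport hAc
  have hsum (z : ℝ) : Integrable fun u => A u + A (u + z) + A (u - z) :=
    (hAi.add (hAi.comp_add_right z)).add (hAi.comp_sub_right z)
  have hHz (z : ℝ) : Integrable fun u => H (u, z) :=
    (hsum z).mono' (by fun_prop) (ae_of_all _ fun u => hHA u z)
  obtain ⟨R, hR⟩ := hAc.isCompact.isBounded.subset_closedBall 0
  have hA0 (u : ℝ) (hu : R < |u|) : A u = 0 := by
    refine image_eq_zero_of_notMem_tsupport fun h => ?_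
    have := hR h
    simp only [Metric.mem_closedBall, dist_zero_right, Real.norm_eq_abs] at this
    linarith
  have hfar (z : ℝ) : ∫ u, |H (u, z)| ≤ 3 * ∫ u, A u := by
    calc ∫ u, |H (u, z)| ≤ ∫ u, (A u + A (u + z) + A (u - z)) :=
          integral_mono (hHz z).abs (hsum z) fun u => hHA u z
      _ = 3 * ∫ u, A u := by
          have hAz : Integrable fun u => A u + A (u + z) := hAi.add (hAi.comp_add_right z)
          rw [integral_add hAz (hAi.comp_sub_right z), integral_add hAi (hAi.comp_add_right z),
            integral_add_right_eq_self, integral_sub_right_eq_self]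
          ring
  have hnear (z : ℝ) (hz : |z| ≤ 1) :
      ∫ u, |H (u, z)| ≤ volume.real (Icc (-(R + 1)) (R + 1)) * M * z ^ 2 := by
    calc ∫ u, |H (u, z)| ≤ ∫ u, (Icc (-(R + 1)) (R + 1)).indicator (fun _ => M * z ^ 2) u := by
          refine integral_mono (hHz z).abs
            ((integrable_indicator_iff measurableSet_Icc).2 continuousOn_const.integrableOn_Icc) fun u => ?_
          by_cases hu : u ∈ Icc (-(R + 1)) (R + 1)
          · rw [indicator_of_mem hu]
            exact hHM u z
          · have hu' : R + 1 < |u| := by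
              rw [mem_Icc, ← abs_le] at hu
              exact not_le.1 hu
            have h1 := abs_sub_abs_le_abs_sub u (-z)
            have h2 := abs_sub_abs_le_abs_sub u z
            rw [abs_neg, sub_neg_eq_add] at h1
            have := hHA u z
            rw [hA0 u (by linarith), hA0 (u + z) (by linarith), hA0 (u - z) (by linarith)] at this
            rw [indicator_of_notMem hu]
            simpa using this
      _ = _ := by
          rw [integral_indicator measurableSet_Icc, setIntegral_const, smul_eq_mul, mul_assoc]
  set K := max (3 * ∫ u, A u) (volume.real (Icc (-(R + 1)) (R + 1)) * M) with hK
  have hbound (z : ℝ) : ∫ u, |H (u, z)| ≤ K * min 1 (z ^ 2) := by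
    rcases le_or_gt |z| 1 with hz | hz
    · rw [min_eq_right (by rwa [sq_le_one_iff_abs_le_one])]
      exact (hnear z hz).trans (mul_le_mul_of_nonneg_right (le_max_right _ _) (sq_nonneg z))
    · rw [min_eq_left ((one_lt_sq_iff_one_lt_abs z).2 hz).le, mul_one]
      exact (hfar z).trans (le_max_left _ _)
  have hmeas : AEStronglyMeasurable (fun q : ℝ × ℝ => H q / |q.2| ^ (1 + γ))
      (volume.prod volume) := by
    have : Measurable (fun q : ℝ × ℝ => H q / |q.2| ^ (1 + γ)) := by
      have := hH.measurable
      fun_prop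
    exact this.aestronglyMeasurable
  refine (integrable_prod_iff' hmeas).2 ⟨ae_of_all _ fun z => (hHz z).div_const (|z| ^ (1 + γ)), ?_⟩
  refine ((integrable_min_one_sq_div_abs_rpow hγ).const_mul K).mono'
    hmeas.norm.prod_swap.integral_prod_right' (ae_of_all _ fun z => ?_)
  have hk : 0 ≤ |z| ^ (1 + γ) := by positivity
  simp only [norm_div, Real.norm_eq_abs, abs_of_nonneg hk, integral_div]
  rw [abs_of_nonneg (integral_nonneg fun u => abs_nonneg _), ← mul_div_assoc]
  exact div_le_div_of_nonneg_right (hbound z) hk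

/-- Quadratic bound on the symmetric second difference of a `C²` function of compact support. -/
theorem exists_abs_second_difference_le {G : ℝ → ℝ} (hG : ContDiff ℝ 2 G)
    (hGc : HasCompactSupport G) :
    ∃ M : ℝ, ∀ u z, |G (u + z) + G (u - z) - 2 * G u| ≤ M * z ^ 2 := by
  have hG' : ContDiff ℝ 1 (deriv G) := ((contDiff_succ_iff_deriv (n := 1)).1 hG).2.2
  obtain ⟨C, hC⟩ := hG'.lipschitzWith_of_hasCompactSupport hGc.deriv one_ne_zero
  have hd (x : ℝ) : HasDerivAt G (deriv G x) x :=
    (hG.differentiable two_ne_zero x).hasDerivAt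
  refine ⟨2 * C, fun u z => ?_⟩
  have hφ (t : ℝ) : HasDerivAt (fun t => G (u + t) + G (u - t))
      (deriv G (u + t) - deriv G (u - t)) t := by
    have h1 := (hd (u + t)).comp_const_add u t
    have h2 := (hd (u - t)).comp_const_sub u t
    exact h1.add h2
  have hb (t : ℝ) (ht : t ∈ Icc (-|z|) |z|) :
      ‖deriv G (u + t) - deriv G (u - t)‖ ≤ 2 * C * |z| := by
    have h := hC.dist_le_mul (u + t) (u - t)
    rw [dist_eq_norm, dist_eq_norm, show u + t - (u - t) = 2 * t by ring, norm_mul,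
      Real.norm_ofNat, Real.norm_eq_abs t] at h
    have : |t| ≤ |z| := abs_le.2 ht
    nlinarith [C.coe_nonneg]
  have h := (convex_Icc (-|z|) |z|).norm_image_sub_le_of_norm_hasDerivWithin_le
    (fun t _ => (hφ t).hasDerivWithinAt) hb (x := 0) (y := z) (by simp)
    ⟨neg_abs_le z, le_abs_self z⟩
  simp only [add_zero, sub_zero, Real.norm_eq_abs] at h
  rw [← two_mul] at h
  calc _ ≤ _ := h
    _ = _ := by rw [mul_assoc, abs_mul_abs_self]; ring

/-- The weighted second difference of a `C²` function of compact support is jointly integrable. -/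
theorem integrable_second_difference_div_abs_rpow {γ : ℝ} (hγ : γ ∈ Set.Ioo (0 : ℝ) 2)
    {G : ℝ → ℝ} (hG : ContDiff ℝ 2 G) (hGc : HasCompactSupport G) :
    Integrable (fun q : ℝ × ℝ =>
      (G (q.1 + q.2) + G (q.1 - q.2) - 2 * G q.1) / |q.2| ^ (1 + γ)) := by
  obtain ⟨M, hM⟩ := exists_abs_second_difference_le hG hGc
  have hcont := hG.continuous
  refine integrable_prod_div_abs_rpow hγ
    (H := fun q => G (q.1 + q.2) + G (q.1 - q.2) - 2 * G q.1) (A := fun u => 2 * |G u|)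
    (by fun_prop) (by fun_prop) (hGc.norm.mul_left) hM fun u z => ?_
  rw [abs_le]
  constructor <;> linarith [neg_abs_le (G (u + z)), neg_abs_le (G (u - z)), neg_abs_le (G u),
    le_abs_self (G (u + z)), le_abs_self (G (u - z)), le_abs_self (G u)]

/-- A `C¹` function of compact support has finite Gagliardo energy. -/
theorem integrable_sq_difference_div_abs_rpow {γ : ℝ} (hγ : γ ∈ Set.Ioo (0 : ℝ) 2)
    {G : ℝ → ℝ} (hG : ContDiff ℝ 1 G) (hGc : HasCompactSupport G) :
    Integrable (fun q : ℝ × ℝ => (G q.1 - G (q.1 + q.2)) ^ 2 / |q.2| ^ (1 + γ)) := by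
  obtain ⟨C, hC⟩ := hG.lipschitzWith_of_hasCompactSupport hGc one_ne_zero
  have hcont := hG.continuous
  refine integrable_prod_div_abs_rpow hγ
    (H := fun q => (G q.1 - G (q.1 + q.2)) ^ 2) (A := fun u => 2 * (G u * G u)) (M := (C : ℝ) ^ 2)
    (by fun_prop) (by fun_prop) (hGc.mul_left.mul_left) (fun u z => ?_) fun u z => ?_
  · have h := hC.dist_le_mul u (u + z)
    rw [dist_eq_norm, dist_eq_norm, sub_add_cancel_left, norm_neg, Real.norm_eq_abs,
      Real.norm_eq_abs] at h
    rw [abs_pow, ← sq_abs z, ← mul_pow]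
    gcongr
  · rw [abs_of_nonneg (sq_nonneg _)]
    nlinarith [sq_nonneg (G u + G (u + z)), mul_self_nonneg (G (u - z))]

/-- Symmetrized form of the truncated fractional Laplacian. -/
theorem fracLapTrunc_eq_integral_second_difference {γ : ℝ} (hγ : γ ∈ Set.Ioo (0 : ℝ) 2) (c : ℝ)
    {G : ℝ → ℝ} (hG : Continuous G) (hGc : HasCompactSupport G) {ε : ℝ} (hε : 0 < ε) (u : ℝ) :
    fracLapTrunc c γ G ε u =
      c / 2 * ∫ z in {z : ℝ | ε ≤ |z|}, (G (u + z) + G (u - z) - 2 * G u) / |z| ^ (1 + γ) := by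
  obtain ⟨B, hB⟩ := hGc.exists_bound_of_continuous hG
  have hS : MeasurableSet {z : ℝ | ε ≤ |z|} := measurableSet_le measurable_const measurable_abs
  have hSu : MeasurableSet {v : ℝ | ε ≤ |u - v|} := measurableSet_le measurable_const (by fun_prop)
  set f : ℝ → ℝ := {z : ℝ | ε ≤ |z|}.indicator fun z => (G (u + z) - G u) / |z| ^ (1 + γ) with hf
  have hfi : Integrable f := by
    refine ((integrable_min_one_sq_div_abs_rpow hγ).const_mul (2 * B / min 1 (ε ^ 2))).mono' ?_
      (ae_of_all _ fun z => ?_)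
    · have := hG.measurable
      exact (Measurable.indicator (by fun_prop) hS).aestronglyMeasurable
    · have hB0 : 0 ≤ B := (norm_nonneg _).trans (hB 0)
      have hmin : 0 < min 1 (ε ^ 2) := by positivity
      have hk : 0 ≤ |z| ^ (1 + γ) := by positivity
      by_cases hz : z ∈ {z : ℝ | ε ≤ |z|}
      · rw [hf, indicator_of_mem hz, norm_div, Real.norm_of_nonneg hk, ← mul_div_assoc]
        refine div_le_div_of_nonneg_right ?_ hk
        have hle : min 1 (ε ^ 2) ≤ min 1 (z ^ 2) := by
          rw [← sq_abs z]
          exact min_le_min_left _ (pow_le_pow_left₀ hε.le hz 2)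
        calc ‖G (u + z) - G u‖ ≤ 2 * B := by
              linarith [norm_sub_le (G (u + z)) (G u), hB (u + z), hB u]
          _ = 2 * B / min 1 (ε ^ 2) * min 1 (ε ^ 2) := by field_simp
          _ ≤ _ := by gcongr
      · rw [hf, indicator_of_notMem hz, norm_zero]
        positivity
  have htrans : ∫ v in {v : ℝ | ε ≤ |u - v|}, (G v - G u) / |u - v| ^ (γ + 1) = ∫ z, f z := by
    rw [← integral_indicator hSu, ← integral_add_left_eq_self _ u]
    refine integral_congr_ae (ae_of_all _ fun z => ?_)
    simp [hf, indicator, add_comm γ 1]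
  have hsymm : ∫ z in {z : ℝ | ε ≤ |z|}, (G (u + z) + G (u - z) - 2 * G u) / |z| ^ (1 + γ)
      = ∫ z, (f z + f (-z)) := by
    rw [← integral_indicator hS]
    refine integral_congr_ae (ae_of_all _ fun z => ?_)
    by_cases hz : ε ≤ |z|
    · simp only [hf, indicator, mem_ofPred_eq, abs_neg, hz, if_true, ← sub_eq_add_neg]
      ring
    · simp [hf, indicator, hz]
  rw [fracLapTrunc, htrans, hsymm, integral_add hfi hfi.comp_neg, integral_neg_eq_self f volume]
  ring

/-- Where the weighted second difference is integrable, the truncated fractional Laplacians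
converge to its integral. -/
theorem tendsto_fracLapTrunc {γ : ℝ} (hγ : γ ∈ Set.Ioo (0 : ℝ) 2) (c : ℝ)
    {G : ℝ → ℝ} (hG : Continuous G) (hGc : HasCompactSupport G) {u : ℝ}
    (hu : Integrable fun z => (G (u + z) + G (u - z) - 2 * G u) / |z| ^ (1 + γ)) :
    Tendsto (fun ε => fracLapTrunc c γ G ε u) (𝓝[>] (0 : ℝ))
      (𝓝 (c / 2 * ∫ z, (G (u + z) + G (u - z) - 2 * G u) / |z| ^ (1 + γ))) := by
  set F : ℝ → ℝ := fun z => (G (u + z) + G (u - z) - 2 * G u) / |z| ^ (1 + γ) with hF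
  have hS (ε : ℝ) : MeasurableSet {z : ℝ | ε ≤ |z|} :=
    measurableSet_le measurable_const measurable_abs
  have hlim : Tendsto (fun ε : ℝ => ∫ z, {z : ℝ | ε ≤ |z|}.indicator F z) (𝓝[>] (0 : ℝ))
      (𝓝 (∫ z, F z)) := by
    refine tendsto_integral_filter_of_dominated_convergence (fun z => ‖F z‖)
      (Eventually.of_forall fun ε => hu.aestronglyMeasurable.indicator (hS ε))
      (Eventually.of_forall fun ε => ae_of_all _ fun z => norm_indicator_le_norm_self _ _)
      hu.norm ?_
    filter_upwards [compl_mem_ae_iff.2 (measure_singleton (0 : ℝ))] with z hz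
    have hz0 : 0 < |z| := abs_pos.2 hz
    refine tendsto_const_nhds.congr' ?_
    filter_upwards [nhdsWithin_le_nhds (Iic_mem_nhds hz0)] with ε hε
    exact (indicator_of_mem (s := {z : ℝ | ε ≤ |z|}) hε F).symm
  refine (hlim.const_mul (c / 2)).congr' ?_
  filter_upwards [self_mem_nhdsWithin] with ε hε
  rw [fracLapTrunc_eq_integral_second_difference hγ c hG hGc hε, integral_indicator (hS ε)]

/-- Discrete integration by parts: the product of first differences integrates to minus the
pairing with the second difference. -/
theorem integral_difference_mul_difference {ρ G : ℝ → ℝ} (hρ : Measurable ρ) {C : ℝ}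
    (hC : ∀ᵐ u, |ρ u| ≤ C) (hG : Integrable G) (z : ℝ) :
    ∫ u, (G u - G (u + z)) * (ρ u - ρ (u + z)) =
      -∫ u, ρ u * (G (u + z) + G (u - z) - 2 * G u) := by
  have hmul {g : ℝ → ℝ} (hg : Integrable g) : Integrable fun u => ρ u * g u :=
    hg.bdd_mul hρ.aestronglyMeasurable hC
  have hfwd : Integrable fun u => ρ u * (G u - G (u + z)) := hmul (hG.sub (hG.comp_add_right z))
  have hbwd : Integrable fun u => ρ u * (G (u - z) - G u) := hmul ((hG.comp_sub_right z).sub hG)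
  have hbwd' : Integrable fun u => ρ (u + z) * (G u - G (u + z)) := by
    simpa using hbwd.comp_add_right z
  have hshift : ∫ u, ρ (u + z) * (G u - G (u + z)) = ∫ u, ρ u * (G (u - z) - G u) := by
    simpa using integral_add_right_eq_self (fun u => ρ u * (G (u - z) - G u)) z
  calc ∫ u, (G u - G (u + z)) * (ρ u - ρ (u + z))
      = ∫ u, (ρ u * (G u - G (u + z)) - ρ (u + z) * (G u - G (u + z))) := by
        congr 1 with u
        ring
    _ = ∫ u, (ρ u * (G u - G (u + z)) - ρ u * (G (u - z) - G u)) := by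
        rw [integral_sub hfwd hbwd', hshift, ← integral_sub hfwd hbwd]
    _ = _ := by
        rw [← integral_neg]
        congr 1 with u
        ring

theorem stmt3 (γ c : ℝ) (hγ : γ ∈ Set.Ioo (0 : ℝ) 2) (hc : 0 < c)
    (hprob : HasSum (transP c γ) 1)
    (ρ : ℝ → ℝ) (hρmeas : Measurable ρ) (hρbdd : ∃ C : ℝ, ∀ᵐ u : ℝ, |ρ u| ≤ C)
    (hρsem : Integrable (fun q : ℝ × ℝ => (ρ q.1 - ρ q.2) ^ 2 / |q.1 - q.2| ^ (1 + γ)))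
    (G : ℝ → ℝ) (hG : ContDiff ℝ 2 G) (hGc : HasCompactSupport G)
    (L : ℝ → ℝ)
    (hL : ∀ u : ℝ, Tendsto (fun ε => fracLapTrunc c γ G ε u) (𝓝[>] (0 : ℝ)) (𝓝 (L u))) :
    ∫ u : ℝ, ρ u * L u =
      -(c / 2) * ∫ q : ℝ × ℝ, (G q.1 - G q.2) * (ρ q.1 - ρ q.2) / |q.1 - q.2| ^ (1 + γ) := by
  obtain ⟨C, hC⟩ := hρbdd
  have hGcont := hG.continuous
  have hshear : MeasurePreserving (fun q : ℝ × ℝ => (q.1, q.1 + q.2)) volume volume :=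
    measurePreserving_prod_add volume volume
  have hshear_emb : MeasurableEmbedding (fun q : ℝ × ℝ => (q.1, q.1 + q.2)) :=
    (MeasurableEquiv.shearAddRight ℝ).measurableEmbedding
  have hF := integrable_second_difference_div_abs_rpow hγ hG hGc
  have hρF : Integrable (fun q : ℝ × ℝ =>
      ρ q.1 * ((G (q.1 + q.2) + G (q.1 - q.2) - 2 * G q.1) / |q.2| ^ (1 + γ))) :=
    hF.bdd_mul (hρmeas.comp measurable_fst).aestronglyMeasurable
      (Measure.quasiMeasurePreserving_fst.ae hC)
  have hE : Integrable (fun q : ℝ × ℝ =>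
      (G q.1 - G (q.1 + q.2)) * (ρ q.1 - ρ (q.1 + q.2)) / |q.2| ^ (1 + γ)) := by
    have hρE : Integrable (fun q : ℝ × ℝ => (ρ q.1 - ρ (q.1 + q.2)) ^ 2 / |q.2| ^ (1 + γ)) := by
      simpa [Function.comp_def] using hshear.integrable_comp_of_integrable hρsem
    refine ((integrable_sq_difference_div_abs_rpow hγ (hG.of_le one_le_two) hGc).add hρE).mono'
      ?_ (ae_of_all _ fun q => ?_)
    · have := hGcont.measurable
      exact Measurable.aestronglyMeasurable (by fun_prop)
    · have hk : 0 ≤ |q.2| ^ (1 + γ) := by positivity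
      rw [Pi.add_apply, ← add_div, norm_div, Real.norm_of_nonneg hk, Real.norm_eq_abs]
      refine div_le_div_of_nonneg_right (abs_le.2 ⟨?_, ?_⟩) hk
      · nlinarith [sq_nonneg (G q.1 - G (q.1 + q.2) + (ρ q.1 - ρ (q.1 + q.2)))]
      · nlinarith [sq_nonneg (G q.1 - G (q.1 + q.2) - (ρ q.1 - ρ (q.1 + q.2)))]
  have hLeq : ∀ᵐ u, L u =
      c / 2 * ∫ z, (G (u + z) + G (u - z) - 2 * G u) / |z| ^ (1 + γ) := by
    filter_upwards [Integrable.prod_right_ae hF] with u hu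
    exact tendsto_nhds_unique (hL u) (tendsto_fracLapTrunc hγ c hGcont hGc hu)
  have hlhs : ∫ u, ρ u * L u = c / 2 * ∫ q : ℝ × ℝ,
      ρ q.1 * ((G (q.1 + q.2) + G (q.1 - q.2) - 2 * G q.1) / |q.2| ^ (1 + γ)) := by
    rw [Measure.volume_eq_prod, integral_prod _ hρF, ← integral_const_mul]
    refine integral_congr_ae (hLeq.mono fun u hu => ?_)
    simp only [hu, integral_const_mul]
    ring
  have hrhs : ∫ q : ℝ × ℝ, (G q.1 - G q.2) * (ρ q.1 - ρ q.2) / |q.1 - q.2| ^ (1 + γ) =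
      ∫ q : ℝ × ℝ, (G q.1 - G (q.1 + q.2)) * (ρ q.1 - ρ (q.1 + q.2)) / |q.2| ^ (1 + γ) := by
    rw [← hshear.integral_comp hshear_emb]
    simp
  rw [hlhs, hrhs, Measure.volume_eq_prod, integral_prod_symm _ hρF, integral_prod_symm _ hE,
    neg_mul, ← mul_neg, ← integral_neg]
  congr 2 with z
  simp only [← mul_div_assoc, integral_div]
  rw [integral_difference_mul_difference hρmeas hC
    (hGcont.integrable_of_hasCompactSupport hGc) z, neg_div, neg_neg]
end

section
/- Let γ ∈ (0,2), let I = (−∞,0) or I = (0,∞), and let ρ : ℝ → ℝ be an essentially bounded measurable function such that ∬_{I×I} (ρ(u)−ρ(v))²/|u−v|^{1+γ} du dv < ∞. Let G ∈ C_c^2(ℝ*) if γ ∈ (1,2), and G ∈ C_{c0}^2(ℝ) if γ ∈ (0,1]. Then ∫_I ρ(u) [−(−Δ)_I^{γ/2}G](u) du = −(c_γ/2) ∬_{I×I} (G(u)−G(v))(ρ(u)−ρ(v))/|u−v|^{1+γ} du dv. -/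
open MeasureTheory Filter Set Topology

/-- The singular kernel `|w|^{-γ-1}`, equal to `0` at the origin. -/
noncomputable def fracKernel (γ w : ℝ) : ℝ := (|w| ^ (γ + 1))⁻¹

/-- The kernel `|w|^{-γ-1}` restricted to `ε ≤ |w|`. -/
noncomputable def fracKernelTrunc (γ ε : ℝ) : ℝ → ℝ :=
  {w : ℝ | ε ≤ |w|}.indicator (fracKernel γ)

lemma fracKernel_nonneg (γ w : ℝ) : 0 ≤ fracKernel γ w := by
  unfold fracKernel; positivity

lemma fracKernel_neg (γ w : ℝ) : fracKernel γ (-w) = fracKernel γ w := by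
  simp [fracKernel]

lemma measurable_fracKernel (γ : ℝ) : Measurable (fracKernel γ) := by
  unfold fracKernel; fun_prop

lemma measurableSet_le_abs (ε : ℝ) : MeasurableSet {w : ℝ | ε ≤ |w|} :=
  measurableSet_le measurable_const measurable_id.abs

lemma measurable_fracKernelTrunc (γ ε : ℝ) : Measurable (fracKernelTrunc γ ε) :=
  (measurable_fracKernel γ).indicator (measurableSet_le_abs ε)

lemma fracKernelTrunc_nonneg (γ ε w : ℝ) : 0 ≤ fracKernelTrunc γ ε w :=
  indicator_nonneg (fun w _ => fracKernel_nonneg γ w) w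

lemma fracKernelTrunc_le (γ ε w : ℝ) : fracKernelTrunc γ ε w ≤ fracKernel γ w :=
  indicator_le_self' (fun w _ => fracKernel_nonneg γ w) w

lemma fracKernelTrunc_neg (γ ε w : ℝ) : fracKernelTrunc γ ε (-w) = fracKernelTrunc γ ε w := by
  simp [fracKernelTrunc, indicator_apply, fracKernel_neg]

lemma tendsto_fracKernelTrunc {γ : ℝ} (hγ : 0 < γ) (w : ℝ) :
    Tendsto (fun ε => fracKernelTrunc γ ε w) (𝓝[>] (0 : ℝ)) (𝓝 (fracKernel γ w)) := by
  rcases eq_or_ne w 0 with rfl | hw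
  · refine tendsto_const_nhds.congr' ?_
    filter_upwards [self_mem_nhdsWithin] with ε (hε : 0 < ε)
    rw [fracKernelTrunc, indicator_of_notMem (by simpa using hε)]
    simp [fracKernel, Real.zero_rpow (by linarith : γ + 1 ≠ 0)]
  · refine tendsto_const_nhds.congr' ?_
    have h : Iio |w| ∈ 𝓝[>] (0 : ℝ) := mem_nhdsWithin_of_mem_nhds (Iio_mem_nhds (abs_pos.2 hw))
    filter_upwards [h] with ε (hε : ε < |w|)
    rw [fracKernelTrunc, indicator_of_mem (by simpa using hε.le)]

lemma integrable_fracKernelTrunc {γ ε : ℝ} (hγ : 0 < γ) (hε : 0 < ε) :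
    Integrable (fracKernelTrunc γ ε) := by
  have h := integrable_fun_norm_addHaar (volume : Measure ℝ)
    (f := (Ici ε).indicator fun r : ℝ => (r ^ (γ + 1))⁻¹)
  simp only [Module.finrank_self, Nat.sub_self, pow_zero, one_smul] at h
  have h2 : Integrable ((Ici ε).indicator fun r : ℝ => (r ^ (γ + 1))⁻¹) := by
    rw [integrable_indicator_iff measurableSet_Ici, integrableOn_Ici_iff_integrableOn_Ioi]
    refine (integrableOn_Ioi_rpow_of_lt (a := -(γ + 1)) (by linarith) hε).congr_fun ?_
      measurableSet_Ioi
    intro r hr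
    exact Real.rpow_neg (hε.trans hr).le _
  exact (h.2 h2.integrableOn).congr (ae_of_all _ fun w => by
    simp [fracKernelTrunc, fracKernel, indicator_apply])

lemma integrable_indicator_abs_rpow {s : ℝ} (hs : -1 < s) :
    Integrable ((Icc (-1 : ℝ) 1).indicator fun w : ℝ => |w| ^ s) := by
  have h := integrable_fun_norm_addHaar (volume : Measure ℝ)
    (f := (Iic 1).indicator fun r : ℝ => r ^ s)
  simp only [Module.finrank_self, Nat.sub_self, pow_zero, one_smul] at h
  have h2 : IntegrableOn ((Iic 1).indicator fun r : ℝ => r ^ s) (Ioi 0) := by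
    rw [IntegrableOn, integrable_indicator_iff measurableSet_Iic, IntegrableOn,
      Measure.restrict_restrict measurableSet_Iic, Iic_inter_Ioi]
    exact (intervalIntegral.intervalIntegrable_rpow' hs).1
  exact (h.2 h2).congr (ae_of_all _ fun w => by
    simp [indicator_apply, abs_le])

/-- Quantitative regularity and decay of a twice continuously differentiable function with compact
support, as used in the estimates for the regional fractional Laplacian. -/
structure SecondDiffBound (F : ℝ → ℝ) (K R : ℝ) : Prop where
  nonneg : 0 ≤ K
  continuous : Continuous F
  integrable : Integrable F
  bound : ∀ u, |F u| ≤ K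
  eq_zero : ∀ u, R < |u| → F u = 0
  abs_sub_le : ∀ u w, |F (u + w) - F u| ≤ K * |w|
  abs_secondDiff_le : ∀ u w, |F (u + w) + F (u - w) - 2 * F u| ≤ K * w ^ 2

lemma exists_secondDiffBound {F : ℝ → ℝ} (hF : ContDiff ℝ 2 F) (hs : HasCompactSupport F) :
    ∃ K R, SecondDiffBound F K R := by
  obtain ⟨K₀, h₀⟩ := hs.exists_bound_of_continuous hF.continuous
  obtain ⟨K₁, h₁⟩ := ContDiff.lipschitzWith_of_hasCompactSupport hs hF two_ne_zero
  have hF' : ContDiff ℝ 1 (deriv F) := ((contDiff_succ_iff_deriv (n := 1)).1 hF).2.2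
  obtain ⟨K₂, h₂⟩ := ContDiff.lipschitzWith_of_hasCompactSupport hs.deriv hF' one_ne_zero
  obtain ⟨R, hR⟩ := hs.isCompact.isBounded.subset_closedBall (0 : ℝ)
  have hK₀ : 0 ≤ K₀ := (norm_nonneg _).trans (h₀ 0)
  refine ⟨K₀ + K₁ + 2 * K₂, R, ?_, hF.continuous, hF.continuous.integrable_of_hasCompactSupport hs,
    fun u => ?_, fun u hu => ?_, fun u w => ?_, fun u w => ?_⟩
  · positivity
  · refine (h₀ u).trans ?_
    have : (0 : ℝ) ≤ K₁ + 2 * K₂ := by positivity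
    linarith
  · by_contra h
    have := hR (subset_tsupport F h)
    simp at this
    linarith
  · have := h₁.dist_le_mul (u + w) u
    simp only [Real.dist_eq, add_sub_cancel_left] at this
    refine this.trans (mul_le_mul_of_nonneg_right ?_ (abs_nonneg w))
    linarith [K₂.coe_nonneg]
  · have hd : Differentiable ℝ F := hF.differentiable two_ne_zero
    have hder : ∀ t, HasDerivAt (fun t => F (u + t) + F (u - t))
        (deriv F (u + t) - deriv F (u - t)) t := fun t => by
      have e₁ := (hd (u + t)).hasDerivAt.comp_const_add u t
      have e₂ := (hd (u - t)).hasDerivAt.comp_const_sub u t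
      exact (e₁.fun_add e₂).congr_deriv (by ring)
    have key := Convex.norm_image_sub_le_of_norm_deriv_le (s := Metric.closedBall (0 : ℝ) |w|)
      (f := fun t => F (u + t) + F (u - t)) (C := 2 * K₂ * |w|) (x := 0) (y := w)
      (fun t _ => (hder t).differentiableAt) (fun t ht => ?_) (convex_closedBall _ _)
      (by simp) (by simp)
    · simp only [Real.norm_eq_abs, add_zero, sub_zero, mul_assoc, abs_mul_abs_self] at key
      have e : F (u + w) + F (u - w) - 2 * F u = F (u + w) + F (u - w) - (F u + F u) := by ring
      rw [e]
      refine key.trans ?_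
      nlinarith [sq_nonneg w, K₁.coe_nonneg, mul_nonneg hK₀ (sq_nonneg w),
        mul_nonneg K₁.coe_nonneg (sq_nonneg w)]
    · rw [(hder t).deriv]
      have := h₂.dist_le_mul (u + t) (u - t)
      simp only [Real.dist_eq] at this
      have e : u + t - (u - t) = 2 * t := by ring
      rw [e, abs_mul, abs_two] at this
      have ht' : |t| ≤ |w| := by simpa using ht
      rw [Real.norm_eq_abs]
      nlinarith [K₂.coe_nonneg, mul_le_mul_of_nonneg_left ht' K₂.coe_nonneg]

/-- The symmetric second difference of `F` at `u`, each of the two increments being kept only when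
its endpoint lies in `I`. -/
noncomputable def secondDiffOn (I : Set ℝ) (F : ℝ → ℝ) (u w : ℝ) : ℝ :=
  I.indicator 1 (u + w) * (F (u + w) - F u) + I.indicator 1 (u - w) * (F (u - w) - F u)

lemma measurable_indicator_one {I : Set ℝ} (hI : MeasurableSet I) :
    Measurable (I.indicator (1 : ℝ → ℝ)) :=
  measurable_one.indicator hI

lemma abs_indicator_one_mul_le (I : Set ℝ) (u a : ℝ) : |I.indicator 1 u * a| ≤ |a| := by
  by_cases h : u ∈ I <;> simp [h]

lemma integrable_comp_add_mul {f g : ℝ → ℝ} (hf : Integrable f) (hg : Integrable g) :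
    Integrable fun q : ℝ × ℝ => f (q.1 + q.2) * g q.2 :=
  (measurePreserving_add_prod volume volume).integrable_comp_of_integrable (hf.mul_prod hg)

lemma integrable_comp_sub_mul {f g : ℝ → ℝ} (hf : Integrable f) (hg : Integrable g) :
    Integrable fun q : ℝ × ℝ => f (q.1 - q.2) * g q.2 :=
  (measurePreserving_sub_prod volume volume).integrable_comp_of_integrable (hf.mul_prod hg)

lemma integrable_truncated_increments {F : ℝ → ℝ} {γ ε : ℝ} (hF : Integrable F) (hγ : 0 < γ)
    (hε : 0 < ε) :
    Integrable fun q : ℝ × ℝ =>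
      (|F (q.1 + q.2)| + |F (q.1 - q.2)| + 2 * |F q.1|) * fracKernelTrunc γ ε q.2 := by
  have hτ := integrable_fracKernelTrunc hγ hε
  refine (((integrable_comp_add_mul hF.abs hτ).add (integrable_comp_sub_mul hF.abs hτ)).add
    ((hF.abs.const_mul 2).mul_prod hτ)).congr (ae_of_all _ fun q => ?_)
  simp only [Pi.add_apply]
  ring

lemma abs_mul_fracKernel (γ w : ℝ) (hw : w ≠ 0) : |w| * fracKernel γ w = |w| ^ (-γ) := by
  have h : 0 < |w| := abs_pos.2 hw
  rw [fracKernel, ← Real.rpow_neg h.le]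
  nth_rewrite 1 [← Real.rpow_one |w|]
  rw [← Real.rpow_add h]
  congr 1
  ring

lemma sq_mul_fracKernel_le (γ w : ℝ) : w ^ 2 * fracKernel γ w ≤ |w| ^ (1 - γ) := by
  rcases eq_or_ne w 0 with rfl | hw
  · simp only [ne_eq, OfNat.ofNat_ne_zero, not_false_eq_true, zero_pow, zero_mul]
    positivity
  · have h : 0 < |w| := abs_pos.2 hw
    rw [← sq_abs, pow_two, mul_assoc, abs_mul_fracKernel γ w hw, sub_eq_add_neg,
      Real.rpow_add h, Real.rpow_one]

lemma abs_mul_fracKernel_le {γ u w : ℝ} (hγ : 0 < γ) (hu : u ≠ 0) (huw : |u| ≤ |w|) :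
    |w| * fracKernel γ w ≤ |u| ^ (-(γ / 2)) * |w| ^ (-(γ / 2)) := by
  have hu' : 0 < |u| := abs_pos.2 hu
  have hw : 0 < |w| := hu'.trans_le huw
  rw [abs_mul_fracKernel γ w (abs_pos.1 hw), show -γ = -(γ / 2) + -(γ / 2) by ring,
    Real.rpow_add hw]
  refine mul_le_mul_of_nonneg_right ?_ (by positivity)
  exact Real.rpow_le_rpow_of_nonpos hu' huw (by linarith)

/-- An integrable majorant, on `ℝ × ℝ`, of the second differences of `F` weighted with the singular
kernel. -/
noncomputable def secondDiffMajorant (γ : ℝ) (F : ℝ → ℝ) (K R : ℝ) (q : ℝ × ℝ) : ℝ :=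
  (Icc (-(R + 1)) (R + 1)).indicator (fun _ => K) q.1 *
      (Icc (-1 : ℝ) 1).indicator (fun w : ℝ => |w| ^ (1 - γ)) q.2 +
    2 * K * ((Icc (-1 : ℝ) 1).indicator (fun w : ℝ => |w| ^ (-(γ / 2))) q.1 *
      (Icc (-1 : ℝ) 1).indicator (fun w : ℝ => |w| ^ (-(γ / 2))) q.2) +
    (|F (q.1 + q.2)| + |F (q.1 - q.2)| + 2 * |F q.1|) * fracKernelTrunc γ 1 q.2

namespace SecondDiffBound

variable {F : ℝ → ℝ} {K R γ : ℝ}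

lemma integrable_majorant (hF : SecondDiffBound F K R) (hγ : γ ∈ Ioo (0 : ℝ) 2) :
    Integrable (secondDiffMajorant γ F K R) := by
  have h₁ : Integrable ((Icc (-(R + 1)) (R + 1)).indicator (fun _ : ℝ => K)) :=
    (integrable_indicator_iff measurableSet_Icc).2 (integrableOn_const (by simp))
  have h₂ := integrable_indicator_abs_rpow (s := 1 - γ) (by linarith [hγ.2])
  have h₃ := integrable_indicator_abs_rpow (s := -(γ / 2)) (by linarith [hγ.2])
  exact ((h₁.mul_prod h₂).add ((h₃.mul_prod h₃).const_mul (2 * K))).add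
    (integrable_truncated_increments hF.integrable hγ.1 one_pos)

lemma majorant_terms_nonneg (hF : SecondDiffBound F K R) (q : ℝ × ℝ) :
    0 ≤ (Icc (-(R + 1)) (R + 1)).indicator (fun _ => K) q.1 *
      (Icc (-1 : ℝ) 1).indicator (fun w : ℝ => |w| ^ (1 - γ)) q.2 ∧
    0 ≤ 2 * K * ((Icc (-1 : ℝ) 1).indicator (fun w : ℝ => |w| ^ (-(γ / 2))) q.1 *
      (Icc (-1 : ℝ) 1).indicator (fun w : ℝ => |w| ^ (-(γ / 2))) q.2) ∧
    0 ≤ (|F (q.1 + q.2)| + |F (q.1 - q.2)| + 2 * |F q.1|) * fracKernelTrunc γ 1 q.2 := by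
  have hp : ∀ s w : ℝ, 0 ≤ (Icc (-1 : ℝ) 1).indicator (fun w : ℝ => |w| ^ s) w :=
    fun s w => indicator_nonneg (fun w _ => by positivity) w
  exact ⟨mul_nonneg (indicator_nonneg (fun _ _ => hF.nonneg) _) (hp _ _),
    mul_nonneg (by linarith [hF.nonneg]) (mul_nonneg (hp _ _) (hp _ _)),
    mul_nonneg (by positivity) (fracKernelTrunc_nonneg _ _ _)⟩

/-- The increments of `F` by steps of size at most `1` vanish away from the support. -/
lemma increments_eq_zero (hF : SecondDiffBound F K R) {u w : ℝ} (hw : |w| ≤ 1)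
    (hu : R + 1 < |u|) : F (u + w) = 0 ∧ F (u - w) = 0 ∧ F u = 0 := by
  refine ⟨hF.eq_zero _ ?_, hF.eq_zero _ ?_, hF.eq_zero _ (by linarith [abs_nonneg w])⟩
  · have := abs_sub_abs_le_abs_sub u (-w)
    rw [abs_neg, sub_neg_eq_add] at this
    linarith
  · linarith [abs_sub_abs_le_abs_sub u w]

lemma abs_secondDiffOn_mul_le (hF : SecondDiffBound F K R) (hγ : 0 < γ) {I : Set ℝ}
    (hball : ∀ u ∈ I, ∀ w, |w| < |u| → u + w ∈ I) {u : ℝ} (hu : u ∈ I) (hu0 : u ≠ 0) (w : ℝ) :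
    |secondDiffOn I F u w * fracKernel γ w| ≤ secondDiffMajorant γ F K R (u, w) := by
  obtain ⟨n₁, n₂, n₃⟩ := hF.majorant_terms_nonneg (γ := γ) (u, w)
  have hk := fracKernel_nonneg γ w
  rw [secondDiffMajorant, abs_mul, abs_of_nonneg hk]
  rcases le_or_gt |w| 1 with hw | hw
  · have hw' : w ∈ Icc (-1 : ℝ) 1 := abs_le.1 hw
    rcases lt_or_ge (R + 1) |u| with hR | hR
    · obtain ⟨z₁, z₂, z₃⟩ := hF.increments_eq_zero hw hR
      have : secondDiffOn I F u w = 0 := by simp [secondDiffOn, z₁, z₂, z₃]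
      rw [this, abs_zero, zero_mul]
      linarith
    rcases lt_or_ge |w| |u| with huw | huw
    · have m₁ : u + w ∈ I := hball u hu w huw
      have m₂ : u - w ∈ I := by
        simpa [sub_eq_add_neg] using hball u hu (-w) (by simpa using huw)
      have e : secondDiffOn I F u w = F (u + w) + F (u - w) - 2 * F u := by
        simp [secondDiffOn, m₁, m₂]; ring
      rw [e]
      have := mul_le_mul_of_nonneg_right (hF.abs_secondDiff_le u w) hk
      have h' := mul_le_mul_of_nonneg_left (sq_mul_fracKernel_le γ w) hF.nonneg
      simp only [indicator_of_mem hw', indicator_of_mem (show u ∈ Icc (-(R + 1)) (R + 1) from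
        abs_le.1 hR)] at n₁ n₂ n₃ ⊢
      linarith
    · have hu1 : u ∈ Icc (-1 : ℝ) 1 := abs_le.1 (huw.trans hw)
      have b : |secondDiffOn I F u w| ≤ 2 * K * |w| := by
        have b₁ := (abs_indicator_one_mul_le I (u + w) (F (u + w) - F u)).trans (hF.abs_sub_le u w)
        have b₂ := (abs_indicator_one_mul_le I (u - w) (F (u - w) - F u)).trans
          (by simpa [sub_eq_add_neg] using hF.abs_sub_le u (-w))
        have := abs_add_le (I.indicator 1 (u + w) * (F (u + w) - F u))
          (I.indicator 1 (u - w) * (F (u - w) - F u))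
        rw [secondDiffOn]
        linarith
      have h₁ := mul_le_mul_of_nonneg_right b hk
      have h₂ := mul_le_mul_of_nonneg_left (abs_mul_fracKernel_le hγ hu0 huw)
        (by linarith [hF.nonneg] : 0 ≤ 2 * K)
      simp only [indicator_of_mem hw', indicator_of_mem hu1] at n₁ n₂ n₃ ⊢
      linarith
  · have hτ : fracKernelTrunc γ 1 w = fracKernel γ w :=
      indicator_of_mem (show w ∈ {w : ℝ | 1 ≤ |w|} from hw.le) _
    have b : |secondDiffOn I F u w| ≤ |F (u + w)| + |F (u - w)| + 2 * |F u| := by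
      have b₁ := (abs_indicator_one_mul_le I (u + w) (F (u + w) - F u)).trans (abs_sub _ _)
      have b₂ := (abs_indicator_one_mul_le I (u - w) (F (u - w) - F u)).trans (abs_sub _ _)
      have := abs_add_le (I.indicator 1 (u + w) * (F (u + w) - F u))
          (I.indicator 1 (u - w) * (F (u - w) - F u))
      rw [secondDiffOn]
      linarith
    have h₁ := mul_le_mul_of_nonneg_right b hk
    simp only [hτ] at n₃ ⊢
    linarith

lemma measurable (hF : SecondDiffBound F K R) : Measurable F := hF.continuous.measurable

lemma integrable_secondDiffOn (hF : SecondDiffBound F K R) (hγ : γ ∈ Ioo (0 : ℝ) 2) {I : Set ℝ}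
    (hI : MeasurableSet I) (hball : ∀ u ∈ I, ∀ w, |w| < |u| → u + w ∈ I) (h0 : (0 : ℝ) ∉ I) :
    Integrable fun q : ℝ × ℝ =>
      I.indicator 1 q.1 * (secondDiffOn I F q.1 q.2 * fracKernel γ q.2) := by
  have m₁ := hF.measurable
  have m₂ := measurable_fracKernel γ
  have m₃ := measurable_indicator_one hI
  refine (hF.integrable_majorant hγ).mono' ?_ (ae_of_all _ fun q => ?_)
  · unfold secondDiffOn
    exact Measurable.aestronglyMeasurable (by fun_prop)
  · by_cases hu : q.1 ∈ I
    · simpa [hu] using hF.abs_secondDiffOn_mul_le hγ.1 hball hu (fun h => h0 (h ▸ hu)) q.2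
    · obtain ⟨n₁, n₂, n₃⟩ := hF.majorant_terms_nonneg (γ := γ) q
      simp only [hu, not_false_eq_true, indicator_of_notMem, zero_mul, norm_zero]
      exact add_nonneg (add_nonneg n₁ n₂) n₃

lemma integrable_sq_sub (hF : SecondDiffBound F K R) (hγ : γ ∈ Ioo (0 : ℝ) 2) :
    Integrable fun q : ℝ × ℝ => (F q.1 - F q.2) ^ 2 * fracKernel γ (q.1 - q.2) := by
  have m₁ := hF.measurable
  have m₂ := measurable_fracKernel γ
  have h : Integrable fun q : ℝ × ℝ => (F (q.1 + q.2) - F q.1) ^ 2 * fracKernel γ q.2 := by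
    refine ((hF.integrable_majorant hγ).const_mul (2 * K)).mono'
      (Measurable.aestronglyMeasurable (by fun_prop)) (ae_of_all _ fun ⟨u, w⟩ => ?_)
    obtain ⟨n₁, n₂, n₃⟩ := hF.majorant_terms_nonneg (γ := γ) (u, w)
    have hk := fracKernel_nonneg γ w
    have hK := hF.nonneg
    rw [Real.norm_of_nonneg (by positivity), secondDiffMajorant]
    rcases le_or_gt |w| 1 with hw | hw
    · have hw' : w ∈ Icc (-1 : ℝ) 1 := abs_le.1 hw
      rcases lt_or_ge (R + 1) |u| with hR | hR
      · obtain ⟨z₁, -, z₃⟩ := hF.increments_eq_zero hw hR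
        have hd : (F (u + w) - F u) ^ 2 = 0 := by simp [z₁, z₃]
        rw [hd, zero_mul]
        exact mul_nonneg (by linarith) (add_nonneg (add_nonneg n₁ n₂) n₃)
      · have b : (F (u + w) - F u) ^ 2 ≤ K ^ 2 * w ^ 2 := by
          rw [← sq_abs (F (u + w) - F u), ← sq_abs w, ← mul_pow]
          exact pow_le_pow_left₀ (abs_nonneg _) (hF.abs_sub_le u w) 2
        have h₁ := mul_le_mul_of_nonneg_right b hk
        have h₂ := mul_le_mul_of_nonneg_left (sq_mul_fracKernel_le γ w) (sq_nonneg K)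
        simp only [indicator_of_mem hw', indicator_of_mem (show u ∈ Icc (-(R + 1)) (R + 1) from
          abs_le.1 hR)] at n₁ n₂ n₃ ⊢
        nlinarith [mul_nonneg hK n₁, mul_nonneg hK n₂, mul_nonneg hK n₃]
    · have hτ : fracKernelTrunc γ 1 w = fracKernel γ w :=
        indicator_of_mem (show w ∈ {w : ℝ | 1 ≤ |w|} from hw.le) _
      have b₁ := abs_sub (F (u + w)) (F u)
      have b : (F (u + w) - F u) ^ 2 ≤ 2 * K * (|F (u + w)| + |F (u - w)| + 2 * |F u|) := by
        rw [← sq_abs, pow_two]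
        refine mul_le_mul ?_ ?_ (abs_nonneg _) (by linarith)
        · linarith [hF.bound u, hF.bound (u + w)]
        · linarith [abs_nonneg (F u), abs_nonneg (F (u - w))]
      have h₁ := mul_le_mul_of_nonneg_right b hk
      simp only [hτ] at n₃ ⊢
      nlinarith [mul_nonneg hK n₁, mul_nonneg hK n₂]
  refine ((measurePreserving_prod_neg_add volume volume).integrable_comp_of_integrable h).congr
    (ae_of_all _ fun q => ?_)
  have e := fracKernel_neg γ (q.1 - q.2)
  rw [neg_sub] at e
  simp only [Function.comp_apply, neg_add_eq_sub, add_sub_cancel, e]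
  ring

end SecondDiffBound

lemma regFracLapTrunc_eq_integral_secondDiffOn {F G : ℝ → ℝ} {K R γ c ε u : ℝ} {I : Set ℝ}
    (hF : SecondDiffBound F K R) (hγ : 0 < γ) (hI : MeasurableSet I) (hFG : EqOn F G I)
    (hε : 0 < ε) (hu : u ∈ I) :
    regFracLapTrunc c γ I G ε u =
      c / 2 * ∫ w, secondDiffOn I F u w * fracKernelTrunc γ ε w := by
  set f : ℝ → ℝ := fun w => I.indicator 1 (u + w) * (F (u + w) - F u) * fracKernelTrunc γ ε w
    with hf
  have m₁ := hF.measurable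
  have m₃ := measurable_indicator_one hI
  have hfi : Integrable f := by
    refine (integrable_fracKernelTrunc hγ hε).bdd_mul (c := 2 * K)
      (Measurable.aestronglyMeasurable (by fun_prop)) (ae_of_all _ fun w => ?_)
    refine (abs_indicator_one_mul_le _ _ _).trans ((abs_sub _ _).trans ?_)
    linarith [hF.bound u, hF.bound (u + w)]
  have h₁ : ∫ v in I ∩ {v : ℝ | ε ≤ |u - v|}, (G v - G u) / |u - v| ^ (γ + 1) = ∫ w, f w := by
    have hm : MeasurableSet {v : ℝ | ε ≤ |u - v|} :=
      measurableSet_le measurable_const (by fun_prop)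
    rw [← integral_indicator (hI.inter hm), ← integral_sub_right_eq_self f u]
    refine integral_congr_ae (ae_of_all _ fun v => ?_)
    by_cases hv : v ∈ I <;> by_cases hd : ε ≤ |u - v| <;>
      simp [hf, fracKernelTrunc, fracKernel, indicator_apply, hv, hd, abs_sub_comm v u,
        hFG hu, div_eq_mul_inv]
    exact Or.inl (hFG hv).symm
  have h₂ : ∫ w, secondDiffOn I F u w * fracKernelTrunc γ ε w = (∫ w, f w) + ∫ w, f (-w) := by
    rw [← integral_add hfi hfi.comp_neg]
    refine integral_congr_ae (ae_of_all _ fun w => ?_)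
    simp only [hf, secondDiffOn, fracKernelTrunc_neg, ← sub_eq_add_neg]
    ring
  rw [regFracLapTrunc, h₁, h₂, integral_neg_eq_self]
  ring

lemma integral_mul_secondDiffOn_trunc {F ρ : ℝ → ℝ} {K R γ ε C : ℝ} {I : Set ℝ}
    (hF : SecondDiffBound F K R) (hγ : 0 < γ) (hI : MeasurableSet I) (hε : 0 < ε)
    (hρ : Measurable ρ) (hC : ∀ᵐ u, |ρ u| ≤ C) :
    ∫ q : ℝ × ℝ, ρ q.1 * (I.indicator 1 q.1 *
        (secondDiffOn I F q.1 q.2 * fracKernelTrunc γ ε q.2)) =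
      -∫ q in I ×ˢ I, (F q.1 - F q.2) * (ρ q.1 - ρ q.2) * fracKernelTrunc γ ε (q.1 - q.2) := by
  have m₁ := hF.measurable
  have m₂ := measurable_fracKernelTrunc γ ε
  have m₃ := measurable_indicator_one hI
  set A : ℝ × ℝ → ℝ := fun q => ρ q.1 * (I.indicator 1 q.1 * (I.indicator 1 (q.1 + q.2) *
    (F (q.1 + q.2) - F q.1) * fracKernelTrunc γ ε q.2)) with hA
  set B : ℝ × ℝ → ℝ := fun q => ρ q.1 * (I.indicator 1 q.1 * (I.indicator 1 q.2 *
    (F q.2 - F q.1) * fracKernelTrunc γ ε (q.2 - q.1))) with hB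
  have hC' : ∀ᵐ q : ℝ × ℝ, ‖ρ q.1‖ ≤ C :=
    Measure.quasiMeasurePreserving_fst.ae (μb := volume) hC
  have iA : Integrable A := by
    refine Integrable.bdd_mul ?_ (hρ.comp measurable_fst).aestronglyMeasurable hC'
    refine (integrable_truncated_increments hF.integrable hγ hε).mono'
      (Measurable.aestronglyMeasurable (by fun_prop)) (ae_of_all _ fun q => ?_)
    refine (abs_indicator_one_mul_le _ _ _).trans ?_
    rw [abs_mul, abs_of_nonneg (fracKernelTrunc_nonneg _ _ _)]
    refine mul_le_mul_of_nonneg_right ?_ (fracKernelTrunc_nonneg _ _ _)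
    refine (abs_indicator_one_mul_le _ _ _).trans ((abs_sub _ _).trans ?_)
    linarith [abs_nonneg (F (q.1 - q.2)), abs_nonneg (F q.1)]
  have hneg : MeasurePreserving
      ((MeasurableEquiv.refl ℝ).prodCongr (MeasurableEquiv.neg ℝ)) volume volume :=
    (MeasurePreserving.id volume).prod (Measure.measurePreserving_neg volume)
  have iA' : Integrable fun q : ℝ × ℝ => A (q.1, -q.2) :=
    hneg.integrable_comp_of_integrable iA
  have eA' : ∫ q : ℝ × ℝ, A (q.1, -q.2) = ∫ q, A q := hneg.integral_comp' A
  have iB : Integrable B := by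
    refine ((measurePreserving_prod_neg_add volume volume).integrable_comp_of_integrable iA).congr
      (ae_of_all _ fun q => ?_)
    simp only [hA, hB, Function.comp_apply, neg_add_eq_sub, add_sub_cancel]
  have eAB : ∫ q, A q = ∫ q, B q := by
    have hS : MeasurePreserving (MeasurableEquiv.shearAddRight ℝ) volume volume :=
      measurePreserving_prod_add volume volume
    rw [← hS.integral_comp' B]
    refine integral_congr_ae (ae_of_all _ fun q => ?_)
    simp [hA, hB, MeasurableEquiv.shearAddRight]
  have iB' : Integrable fun q : ℝ × ℝ => B q.swap := iB.swap
  have eB : ∫ q : ℝ × ℝ, B q.swap = ∫ q, B q := integral_prod_swap B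
  have hsum : -∫ q in I ×ˢ I,
      (F q.1 - F q.2) * (ρ q.1 - ρ q.2) * fracKernelTrunc γ ε (q.1 - q.2) =
      (∫ q, B q) + ∫ q : ℝ × ℝ, B q.swap := by
    rw [← integral_indicator (hI.prod hI), ← integral_neg, ← integral_add iB iB']
    refine integral_congr_ae (ae_of_all _ fun q => ?_)
    have e := fracKernelTrunc_neg γ ε (q.1 - q.2)
    rw [neg_sub] at e
    by_cases h₁ : q.1 ∈ I <;> by_cases h₂ : q.2 ∈ I <;>
      simp [hB, h₁, h₂, e]
    ring
  rw [hsum, eB, ← eAB]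
  nth_rewrite 2 [← eA']
  rw [← integral_add iA iA']
  refine integral_congr_ae (ae_of_all _ fun q => ?_)
  simp only [hA, secondDiffOn, fracKernelTrunc_neg, ← sub_eq_add_neg]
  ring

lemma tendsto_integral_mul_fracKernelTrunc {α : Type*} [MeasurableSpace α] {μ : Measure α}
    {γ : ℝ} (hγ : 0 < γ) {f w : α → ℝ} (hw : Measurable w) (hf : AEStronglyMeasurable f μ)
    (hi : Integrable (fun a => f a * fracKernel γ (w a)) μ) :
    Tendsto (fun ε => ∫ a, f a * fracKernelTrunc γ ε (w a) ∂μ) (𝓝[>] (0 : ℝ))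
      (𝓝 (∫ a, f a * fracKernel γ (w a) ∂μ)) := by
  refine tendsto_integral_filter_of_dominated_convergence
    (fun a => ‖f a * fracKernel γ (w a)‖) (Eventually.of_forall fun ε => ?_)
    (Eventually.of_forall fun ε => ae_of_all _ fun a => ?_) hi.norm
    (ae_of_all _ fun a => (tendsto_fracKernelTrunc hγ (w a)).const_mul (f a))
  · exact hf.mul ((measurable_fracKernelTrunc γ ε).comp hw).aestronglyMeasurable
  · rw [norm_mul, norm_mul, Real.norm_of_nonneg (fracKernelTrunc_nonneg _ _ _),
      Real.norm_of_nonneg (fracKernel_nonneg _ _)]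
    exact mul_le_mul_of_nonneg_left (fracKernelTrunc_le _ _ _) (norm_nonneg _)

/-- Integration by parts for the regional fractional Laplacian on a set `I` that contains, with each
of its points `u`, the ball of radius `|u|` around `u`. -/
lemma integral_mul_regFracLap {F G ρ L : ℝ → ℝ} {K R γ c C : ℝ} {I : Set ℝ}
    (hF : SecondDiffBound F K R) (hγ : γ ∈ Ioo (0 : ℝ) 2) (hI : MeasurableSet I)
    (hball : ∀ u ∈ I, ∀ w, |w| < |u| → u + w ∈ I) (h0 : (0 : ℝ) ∉ I) (hFG : EqOn F G I)
    (hρ : Measurable ρ) (hC : ∀ᵐ u, |ρ u| ≤ C)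
    (hρsem : IntegrableOn
      (fun q : ℝ × ℝ => (ρ q.1 - ρ q.2) ^ 2 / |q.1 - q.2| ^ (1 + γ)) (I ×ˢ I))
    (hL : ∀ u ∈ I,
      Tendsto (fun ε => regFracLapTrunc c γ I G ε u) (𝓝[>] (0 : ℝ)) (𝓝 (L u))) :
    ∫ u in I, ρ u * L u =
      -(c / 2) * ∫ q in I ×ˢ I,
        (G q.1 - G q.2) * (ρ q.1 - ρ q.2) / |q.1 - q.2| ^ (1 + γ) := by
  have m₁ := hF.measurable
  have m₂ := measurable_fracKernel γ
  have m₃ := measurable_indicator_one hI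
  have iH := hF.integrable_secondDiffOn hγ hI hball h0
  have hC' : ∀ᵐ q : ℝ × ℝ, ‖ρ q.1‖ ≤ C :=
    Measure.quasiMeasurePreserving_fst.ae (μb := volume) hC
  have iT : Integrable fun q : ℝ × ℝ =>
      ρ q.1 * (I.indicator 1 q.1 * (secondDiffOn I F q.1 q.2 * fracKernel γ q.2)) :=
    iH.bdd_mul (hρ.comp measurable_fst).aestronglyMeasurable hC'
  have hLeq : ∀ᵐ u, I.indicator (fun u => ρ u * L u) u = c / 2 * ∫ w,
      ρ u * (I.indicator 1 u * (secondDiffOn I F u w * fracKernel γ w)) := by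
    filter_upwards [iH.prod_right_ae] with u hu
    by_cases huI : u ∈ I
    · simp only [huI, indicator_of_mem, Pi.one_apply, one_mul] at hu ⊢
      have ht := (tendsto_integral_mul_fracKernelTrunc hγ.1 (f := secondDiffOn I F u) (w := id)
        measurable_id (by unfold secondDiffOn; exact Measurable.aestronglyMeasurable (by fun_prop))
        hu).const_mul (c / 2)
      have hLu := tendsto_nhds_unique_of_eventuallyEq (hL u huI) ht (by
        filter_upwards [self_mem_nhdsWithin] with ε hε
        exact regFracLapTrunc_eq_integral_secondDiffOn hF hγ.1 hI hFG hε huI)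
      rw [hLu, integral_const_mul]
      simp only [id]
      ring
    · simp [huI]
  have hleft : ∫ u in I, ρ u * L u = c / 2 * ∫ q : ℝ × ℝ,
      ρ q.1 * (I.indicator 1 q.1 * (secondDiffOn I F q.1 q.2 * fracKernel γ q.2)) := by
    rw [← integral_indicator hI, integral_congr_ae hLeq, integral_const_mul,
      Measure.volume_eq_prod, integral_prod _ iT]
  have iE : IntegrableOn (fun q : ℝ × ℝ =>
      (F q.1 - F q.2) * (ρ q.1 - ρ q.2) * fracKernel γ (q.1 - q.2)) (I ×ˢ I) := by
    refine ((hF.integrable_sq_sub hγ).integrableOn.add hρsem).mono'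
      (Measurable.aestronglyMeasurable (by fun_prop)) (ae_of_all _ fun q => ?_)
    have hk := fracKernel_nonneg γ (q.1 - q.2)
    rw [norm_mul, Real.norm_of_nonneg hk]
    have e : (ρ q.1 - ρ q.2) ^ 2 / |q.1 - q.2| ^ (1 + γ) =
        (ρ q.1 - ρ q.2) ^ 2 * fracKernel γ (q.1 - q.2) := by
      rw [fracKernel, add_comm, div_eq_mul_inv]
    rw [Pi.add_apply, e, ← add_mul]
    refine mul_le_mul_of_nonneg_right ?_ hk
    rw [Real.norm_eq_abs, abs_le]
    constructor <;>
      nlinarith [sq_nonneg ((F q.1 - F q.2) + (ρ q.1 - ρ q.2)),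
        sq_nonneg ((F q.1 - F q.2) - (ρ q.1 - ρ q.2))]
  have hright : ∫ q in I ×ˢ I, (G q.1 - G q.2) * (ρ q.1 - ρ q.2) / |q.1 - q.2| ^ (1 + γ) =
      ∫ q in I ×ˢ I, (F q.1 - F q.2) * (ρ q.1 - ρ q.2) * fracKernel γ (q.1 - q.2) := by
    refine setIntegral_congr_fun (hI.prod hI) fun q hq => ?_
    simp only [hFG hq.1, hFG hq.2, fracKernel, add_comm γ, div_eq_mul_inv]
  have t₁ := tendsto_integral_mul_fracKernelTrunc (μ := volume) hγ.1 (w := Prod.snd)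
    (f := fun q : ℝ × ℝ => ρ q.1 * (I.indicator 1 q.1 * secondDiffOn I F q.1 q.2))
    measurable_snd (by unfold secondDiffOn; exact Measurable.aestronglyMeasurable (by fun_prop))
    (by simpa only [mul_assoc] using iT)
  have t₂ := (tendsto_integral_mul_fracKernelTrunc (μ := volume.restrict (I ×ˢ I)) hγ.1
    (w := fun q : ℝ × ℝ => q.1 - q.2)
    (f := fun q : ℝ × ℝ => (F q.1 - F q.2) * (ρ q.1 - ρ q.2))
    (by fun_prop) (Measurable.aestronglyMeasurable (by fun_prop)) iE).neg
  have hlim := tendsto_nhds_unique_of_eventuallyEq t₁ t₂ (by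
    filter_upwards [self_mem_nhdsWithin] with ε hε
    simpa only [mul_assoc] using integral_mul_secondDiffOn_trunc hF hγ.1 hI hε hρ hC)
  simp only [mul_assoc] at hlim
  rw [hleft, hright]
  simp only [mul_assoc]
  rw [hlim]
  ring

theorem stmt4 (γ c : ℝ) (hγ : γ ∈ Set.Ioo (0 : ℝ) 2) (hc : 0 < c)
    (hprob : HasSum (transP c γ) 1)
    (I : Set ℝ) (hI : I = Set.Iio (0 : ℝ) ∨ I = Set.Ioi (0 : ℝ))
    (ρ : ℝ → ℝ) (hρmeas : Measurable ρ) (hρbdd : ∃ C : ℝ, ∀ᵐ u : ℝ, |ρ u| ≤ C)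
    (hρsem : IntegrableOn
      (fun q : ℝ × ℝ => (ρ q.1 - ρ q.2) ^ 2 / |q.1 - q.2| ^ (1 + γ)) (I ×ˢ I))
    (G : ℝ → ℝ) (hG1 : 1 < γ → CcTwoStar G) (hG2 : γ ≤ 1 → CcZeroTwo G)
    (L : ℝ → ℝ)
    (hL : ∀ u ∈ I,
      Tendsto (fun ε => regFracLapTrunc c γ I G ε u) (𝓝[>] (0 : ℝ)) (𝓝 (L u))) :
    ∫ u in I, ρ u * L u =
      -(c / 2) * ∫ q in I ×ˢ I,
        (G q.1 - G q.2) * (ρ q.1 - ρ q.2) / |q.1 - q.2| ^ (1 + γ) := by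
  obtain ⟨C, hC⟩ := hρbdd
  have hball : ∀ u ∈ I, ∀ w, |w| < |u| → u + w ∈ I := by
    rcases hI with rfl | rfl <;> intro u hu w hw
    · rw [mem_Iio] at hu ⊢
      rw [abs_of_neg hu] at hw
      linarith [le_abs_self w]
    · rw [mem_Ioi] at hu ⊢
      rw [abs_of_pos hu] at hw
      linarith [neg_abs_le w]
  have h0 : (0 : ℝ) ∉ I := by rcases hI with rfl | rfl <;> simp
  have hIm : MeasurableSet I := by
    rcases hI with rfl | rfl
    exacts [measurableSet_Iio, measurableSet_Ioi]
  obtain ⟨F, hF, hFs, hFG⟩ : ∃ F : ℝ → ℝ, ContDiff ℝ 2 F ∧ HasCompactSupport F ∧ EqOn F G I := by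
    rcases lt_or_ge 1 γ with h | h
    · obtain ⟨Gm, Gp, hm, hms, hp, hps, hG⟩ := hG1 h
      rcases hI with rfl | rfl
      · exact ⟨Gm, hm, hms, fun u hu => by rw [hG, if_pos (mem_Iio.1 hu)]⟩
      · exact ⟨Gp, hp, hps, fun u hu => by rw [hG, if_neg (not_lt.2 (le_of_lt hu))]⟩
    · obtain ⟨hG, _, b, _, _, _, hb⟩ := hG2 h
      refine ⟨G, hG, HasCompactSupport.intro (isCompact_closedBall (0 : ℝ) b) fun u hu => hb u ?_,
        fun u _ => rfl⟩
      simpa using (not_le.1 fun h => hu (by simpa using h)).le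
  obtain ⟨K, R, hKR⟩ := exists_secondDiffBound hF hFs
  exact integral_mul_regFracLap hKR hγ hIm hball h0 hFG hρmeas hC hρsem hL
end

section
/- Let γ ∈ (0,2), T > 0 and G ∈ S_Dif. Then lim_{n→∞} (1/n) ∑_{x∈ℤ} sup_{s∈[0,T]} | n^γ ∑_{y∈ℤ} (G(s, y/n) − G(s, x/n)) p(y−x) − [−(−Δ)^{γ/2}G](s, x/n) | = 0. -/
open MeasureTheory Filter Set Topology

/-- The fractional Laplacian `[−(−Δ)^{γ/2}G](u) = lim_{ε→0⁺} [...]_ε(u)`. -/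
noncomputable def fracLap (c γ : ℝ) (G : ℝ → ℝ) (u : ℝ) : ℝ :=
  limUnder (𝓝[>] (0 : ℝ)) (fun ε => fracLapTrunc c γ G ε u)

/-- `G ∈ S_Dif = P([0,T], C_c^∞(ℝ))`. -/
def SDifMem (G : ℝ → ℝ → ℝ) : Prop :=
  ∃ (k : ℕ) (a : ℕ → ℝ → ℝ),
    (∀ j : ℕ, ContDiff ℝ (⊤ : ℕ∞) (a j) ∧ HasCompactSupport (a j)) ∧
    ∀ t u : ℝ, G t u = ∑ j ∈ Finset.range (k + 1), a j u * t ^ j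

/-- The error of the right-endpoint rule on one cell. -/
lemma abs_mul_sub_integral_le {f f' : ℝ → ℝ} {a b : ℝ} (hab : a ≤ b)
    (hd : ∀ w ∈ Icc a b, HasDerivAt f (f' w) w) (hc : ContinuousOn f' (Icc a b)) :
    |(b - a) * f b - ∫ w in a..b, f w| ≤ (b - a) * ∫ w in a..b, |f' w| := by
  have hfc : ContinuousOn f (Icc a b) := fun w hw => (hd w hw).continuousAt.continuousWithinAt
  have hfi : IntervalIntegrable f volume a b := by
    apply ContinuousOn.intervalIntegrable; rwa [uIcc_of_le hab]
  have hci : IntervalIntegrable (fun w => |f' w|) volume a b := by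
    apply ContinuousOn.intervalIntegrable; rw [uIcc_of_le hab]; exact hc.abs
  have key : ∀ w ∈ Icc a b, |f b - f w| ≤ ∫ t in a..b, |f' t| := by
    intro w hw
    have hsub : Icc w b ⊆ Icc a b := Icc_subset_Icc_left hw.1
    have hi : IntervalIntegrable f' volume w b := by
      apply ContinuousOn.intervalIntegrable; rw [uIcc_of_le hw.2]; exact hc.mono hsub
    have h1 : ∫ t in w..b, f' t = f b - f w := by
      apply intervalIntegral.integral_eq_sub_of_hasDerivAt _ hi
      intro t ht
      rw [uIcc_of_le hw.2] at ht
      exact hd t (hsub ht)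
    rw [← h1]
    refine (intervalIntegral.abs_integral_le_integral_abs hw.2).trans ?_
    exact intervalIntegral.integral_mono_interval hw.1 hw.2 le_rfl
      (Eventually.of_forall fun t => abs_nonneg _) hci
  have h2 : (b - a) * f b - ∫ w in a..b, f w = ∫ w in a..b, (f b - f w) := by
    rw [intervalIntegral.integral_sub (by simp) hfi]; simp
  have h3 := intervalIntegral.norm_integral_le_of_norm_le_const
    (a := a) (b := b) (f := fun w => f b - f w) (C := ∫ t in a..b, |f' t|) (by
      intro w hw
      rw [uIoc_of_le hab] at hw
      exact key w ⟨hw.1.le, hw.2⟩)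
  rw [h2, ← Real.norm_eq_abs]
  refine h3.trans (le_of_eq ?_)
  rw [abs_of_nonneg (sub_nonneg.2 hab), mul_comm]

/-- The error of the right-endpoint rule with mesh `η` on `(0, ∞)`, for a function which may be
singular at `0`. -/
lemma abs_riemannSum_sub_integral_le {f f' : ℝ → ℝ} {η : ℝ} (hη : 0 < η)
    (hd : ∀ w, 0 < w → HasDerivAt f (f' w) w) (hc : ContinuousOn f' (Ioi 0))
    (hf : IntegrableOn f (Ioi 0)) (hf' : IntegrableOn f' (Ioi η))
    (hs : Summable fun k : ℕ => f (((k : ℝ) + 1) * η)) :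
    |η * (∑' k : ℕ, f (((k : ℝ) + 1) * η)) - ∫ w in Ioi 0, f w| ≤
      η * |f η| + (∫ w in Ioc 0 η, |f w|) + η * ∫ w in Ioi η, |f' w| := by
  have hfη : IntegrableOn f (Ioi η) := hf.mono_set (Ioi_subset_Ioi hη.le)
  have hfc : ContinuousOn f (Ioi 0) := fun w hw => (hd w hw).continuousAt.continuousWithinAt
  have hpos : ∀ k : ℕ, 0 < ((k : ℝ) + 1) * η := fun k => by positivity
  have hle : ∀ k : ℕ, ((k : ℝ) + 1) * η ≤ ((k : ℝ) + 1 + 1) * η := fun k => by nlinarith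
  have hI : ∀ F : ℝ → ℝ, ContinuousOn F (Ioi 0) → ∀ k : ℕ,
      IntervalIntegrable F volume (((k : ℝ) + 1) * η) (((k : ℝ) + 1 + 1) * η) := by
    intro F hF k
    apply ContinuousOn.intervalIntegrable
    rw [uIcc_of_le (hle k)]
    exact hF.mono fun w hw => (hpos k).trans_le hw.1
  have hadj : ∀ F : ℝ → ℝ, ContinuousOn F (Ioi 0) → ∀ N : ℕ,
      ∑ k ∈ Finset.range N, ∫ w in (((k : ℝ) + 1) * η)..(((k : ℝ) + 1 + 1) * η), F w
        = ∫ w in η..(((N : ℝ) + 1) * η), F w := by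
    intro F hF N
    have := intervalIntegral.sum_integral_adjacent_intervals (f := F) (μ := volume)
      (a := fun k : ℕ => ((k : ℝ) + 1) * η) (n := N) (by
        intro k _
        have := hI F hF k
        push_cast
        exact this)
    simpa using this
  have hpart : ∀ N : ℕ, |η * (∑ k ∈ Finset.range N, f (((k : ℝ) + 1 + 1) * η))
      - ∫ w in η..(((N : ℝ) + 1) * η), f w| ≤ η * ∫ w in η..(((N : ℝ) + 1) * η), |f' w| := by
    intro N
    rw [← hadj f hfc, ← hadj _ hc.abs, Finset.mul_sum, Finset.mul_sum, ← Finset.sum_sub_distrib]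
    refine (Finset.abs_sum_le_sum_abs _ _).trans (Finset.sum_le_sum fun k _ => ?_)
    have h := abs_mul_sub_integral_le (f := f) (f' := f') (hle k)
      (fun w hw => hd w ((hpos k).trans_le hw.1)) (hc.mono fun w hw => (hpos k).trans_le hw.1)
    have e : ((k : ℝ) + 1 + 1) * η - ((k : ℝ) + 1) * η = η := by ring
    rwa [e] at h
  have hs' : Summable fun k : ℕ => f (((k : ℝ) + 1 + 1) * η) := by
    have := (summable_nat_add_iff 1).2 hs
    simpa using this
  have htop : Tendsto (fun N : ℕ => ((N : ℝ) + 1) * η) atTop atTop :=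
    (tendsto_atTop_add_const_right _ _ tendsto_natCast_atTop_atTop).atTop_mul_const hη
  have hlim : |η * (∑' k : ℕ, f (((k : ℝ) + 1 + 1) * η)) - ∫ w in Ioi η, f w|
      ≤ η * ∫ w in Ioi η, |f' w| :=
    le_of_tendsto_of_tendsto'
      (((hs'.hasSum.tendsto_sum_nat.const_mul η).sub
        (intervalIntegral_tendsto_integral_Ioi η hfη htop)).abs)
      ((intervalIntegral_tendsto_integral_Ioi η hf'.abs htop).const_mul η) hpart
  have hsplit : ∫ w in Ioi 0, f w = (∫ w in Ioc 0 η, f w) + ∫ w in Ioi η, f w := by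
    rw [← setIntegral_union (Ioc_disjoint_Ioi le_rfl) measurableSet_Ioi
      (hf.mono_set Ioc_subset_Ioi_self) hfη, Ioc_union_Ioi_eq_Ioi hη.le]
  have hsum : ∑' k : ℕ, f (((k : ℝ) + 1) * η)
      = f η + ∑' k : ℕ, f (((k : ℝ) + 1 + 1) * η) := by
    rw [hs.tsum_eq_zero_add]; simp
  have h0 : |∫ w in Ioc 0 η, f w| ≤ ∫ w in Ioc 0 η, |f w| := abs_integral_le_integral_abs
  have h1 : |η * f η| = η * |f η| := by rw [abs_mul, abs_of_pos hη]
  rw [hsum, hsplit]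
  have e : η * (f η + ∑' k : ℕ, f (((k : ℝ) + 1 + 1) * η))
      - ((∫ w in Ioc 0 η, f w) + ∫ w in Ioi η, f w)
      = η * f η - (∫ w in Ioc 0 η, f w)
        + (η * (∑' k : ℕ, f (((k : ℝ) + 1 + 1) * η)) - ∫ w in Ioi η, f w) := by ring
  rw [e, ← h1]
  refine (abs_add_le _ _).trans (add_le_add ((abs_sub _ _).trans (add_le_add le_rfl h0)) hlim)

/-- The symmetric second difference `g(u+w) + g(u-w) - 2 g(u)`. -/
def secondDiff (g : ℝ → ℝ) (u w : ℝ) : ℝ := g (u + w) + g (u - w) - 2 * g u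

/-- The symmetrized integrand of the fractional Laplacian, as a function of the step `w > 0`. -/
noncomputable def levyIntegrand (γ : ℝ) (g : ℝ → ℝ) (u w : ℝ) : ℝ :=
  secondDiff g u w * w ^ (-γ - 1)

lemma fracLapTrunc_eq_integral_levyIntegrand {c γ : ℝ} (hγ : 0 < γ) {g : ℝ → ℝ}
    (hg : Continuous g) {A : ℝ} (hA : ∀ v, |g v| ≤ A) {ε : ℝ} (hε : 0 < ε) (u : ℝ) :
    fracLapTrunc c γ g ε u = c * ∫ w in Ioi ε, levyIntegrand γ g u w := by
  unfold fracLapTrunc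
  congr 1
  set k : ℝ → ℝ := fun w => (g (u + w) - g u) / |w| ^ (γ + 1) with hk
  have hint : ∀ σ : ℝ, IntegrableOn (fun w => (g (u + σ * w) - g u) * w ^ (-γ - 1)) (Ioi ε) := by
    intro σ
    refine Integrable.bdd_mul (c := 2 * A)
      (integrableOn_Ioi_rpow_of_lt (by linarith) hε)
      (Continuous.aestronglyMeasurable (by fun_prop)) (Eventually.of_forall fun w => ?_)
    have h1 := hA (u + σ * w)
    have h2 := hA u
    have h3 := abs_sub (g (u + σ * w)) (g u)
    rw [Real.norm_eq_abs]
    linarith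
  have hpow : ∀ w ∈ Ioi ε, ∀ r : ℝ, r / |w| ^ (γ + 1) = r * w ^ (-γ - 1) := by
    intro w hw r
    have hw0 : 0 < w := hε.trans hw
    rw [abs_of_pos hw0, div_eq_mul_inv, ← Real.rpow_neg hw0.le]
    congr 2; ring
  have hk1 : IntegrableOn k (Ioi ε) := by
    refine (hint 1).congr_fun (fun w hw => ?_) measurableSet_Ioi
    simp only [hk, one_mul, hpow w hw]
  have hk2 : IntegrableOn (fun w => k (-w)) (Ioi ε) := by
    refine (hint (-1)).congr_fun (fun w hw => ?_) measurableSet_Ioi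
    simp only [hk, abs_neg, hpow w hw, neg_mul, one_mul]
  have hk3 : IntegrableOn k (Iic (-ε)) := by
    have h := (Measure.measurePreserving_neg (volume : Measure ℝ)).integrableOn_comp_preimage
      (MeasurableEquiv.neg ℝ).measurableEmbedding (f := k) (s := Iio (-ε))
    rw [integrableOn_Iic_iff_integrableOn_Iio]
    apply h.1
    have e : (Neg.neg : ℝ → ℝ) ⁻¹' Iio (-ε) = Ioi ε := by ext w; simp
    rw [e]
    exact hk2
  have hshift : ∫ v in {v : ℝ | ε ≤ |u - v|}, (g v - g u) / |u - v| ^ (γ + 1)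
      = ∫ w in {w : ℝ | ε ≤ |w|}, k w := by
    have h := (measurePreserving_add_left (volume : Measure ℝ) u).setIntegral_preimage_emb
      (measurableEmbedding_addLeft u) (fun v => (g v - g u) / |u - v| ^ (γ + 1))
      {v : ℝ | ε ≤ |u - v|}
    rw [← h]
    have e : (fun x => u + x) ⁻¹' {v : ℝ | ε ≤ |u - v|} = {w : ℝ | ε ≤ |w|} := by
      ext w; simp
    rw [e]
    simp [hk]
  have hset : {w : ℝ | ε ≤ |w|} = Ici ε ∪ Iic (-ε) := by
    ext w; simp [le_abs, le_neg]
  have hdisj : Disjoint (Ici ε) (Iic (-ε)) := by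
    rw [Set.disjoint_left]
    intro w h1 h2
    simp only [mem_Ici, mem_Iic] at h1 h2
    linarith
  rw [hshift, hset, setIntegral_union hdisj measurableSet_Iic
    ((integrableOn_Ici_iff_integrableOn_Ioi (by simp)).2 hk1) hk3, integral_Ici_eq_integral_Ioi,
    ← integral_comp_neg_Ioi, ← integral_add hk1 hk2]
  refine setIntegral_congr_fun measurableSet_Ioi fun w hw => ?_
  simp only [hk, abs_neg, hpow w hw, levyIntegrand, secondDiff, ← sub_eq_add_neg]
  ring

lemma fracLap_eq_integral_levyIntegrand {c γ : ℝ} (hγ : 0 < γ) {g : ℝ → ℝ}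
    (hg : Continuous g) {A : ℝ} (hA : ∀ v, |g v| ≤ A) (u : ℝ)
    (hi : IntegrableOn (levyIntegrand γ g u) (Ioi 0)) :
    fracLap c γ g u = c * ∫ w in Ioi 0, levyIntegrand γ g u w := by
  apply Tendsto.limUnder_eq
  have h0 : Tendsto (fun ε : ℝ => ε) (𝓝[>] 0) (𝓝 0) := tendsto_id.mono_left nhdsWithin_le_nhds
  have h := ((aecover_Ioi_of_Ioi (μ := volume) h0).integral_tendsto_of_countably_generated hi
    ).const_mul c
  refine h.congr' ?_
  filter_upwards [self_mem_nhdsWithin] with ε hε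
  rw [fracLapTrunc_eq_integral_levyIntegrand hγ hg hA hε, Measure.restrict_restrict
    measurableSet_Ioi, inter_eq_left.2 (Ioi_subset_Ioi (le_of_lt hε))]

/-- The derivative of `levyIntegrand γ g u`. -/
noncomputable def levyIntegrandDeriv (γ : ℝ) (g : ℝ → ℝ) (u w : ℝ) : ℝ :=
  (deriv g (u + w) - deriv g (u - w)) * w ^ (-γ - 1)
    + secondDiff g u w * ((-γ - 1) * w ^ (-γ - 1 - 1))

lemma hasDerivAt_secondDiff {g : ℝ → ℝ} (hg : Differentiable ℝ g) (u w : ℝ) :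
    HasDerivAt (secondDiff g u) (deriv g (u + w) - deriv g (u - w)) w := by
  have h1 : HasDerivAt (fun w => g (u + w)) (deriv g (u + w)) w := by
    simpa using (hg (u + w)).hasDerivAt.comp_const_add u w
  have h2 : HasDerivAt (fun w => g (u - w)) (-deriv g (u - w)) w := by
    simpa using (hg (u - w)).hasDerivAt.comp_const_sub u w
  exact (h1.add h2).sub_const (2 * g u)

lemma hasDerivAt_levyIntegrand (γ : ℝ) {g : ℝ → ℝ} (hg : Differentiable ℝ g) (u : ℝ) {w : ℝ}
    (hw : 0 < w) : HasDerivAt (levyIntegrand γ g u) (levyIntegrandDeriv γ g u w) w :=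
  (hasDerivAt_secondDiff hg u w).mul (Real.hasDerivAt_rpow_const (Or.inl hw.ne'))

lemma continuousOn_levyIntegrandDeriv (γ : ℝ) {g : ℝ → ℝ} (hg : Continuous g)
    (hg' : Continuous (deriv g)) (u : ℝ) : ContinuousOn (levyIntegrandDeriv γ g u) (Ioi 0) := by
  have hp : ∀ r : ℝ, ContinuousOn (fun w : ℝ => w ^ r) (Ioi 0) := fun r w hw =>
    (Real.continuousAt_rpow_const w r (Or.inl (ne_of_gt hw))).continuousWithinAt
  have h1 : Continuous fun w => deriv g (u + w) - deriv g (u - w) := by fun_prop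
  have h2 : Continuous (secondDiff g u) := by unfold secondDiff; fun_prop
  exact (h1.continuousOn.mul (hp _)).add
    (h2.continuousOn.mul (continuousOn_const.mul (hp _)))

lemma abs_sub_le_of_abs_deriv_le {f : ℝ → ℝ} (hf : Differentiable ℝ f) {A : ℝ}
    (hA : ∀ v, |deriv f v| ≤ A) (x y : ℝ) : |f y - f x| ≤ A * |y - x| :=
  Convex.norm_image_sub_le_of_norm_deriv_le (s := univ) (fun x _ => hf x) (fun x _ => hA x)
    convex_univ (mem_univ x) (mem_univ y)

lemma abs_secondDiff_le_sq {g : ℝ → ℝ} (hg : Differentiable ℝ g)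
    (hg' : Differentiable ℝ (deriv g)) {A : ℝ} (hA : ∀ v, |deriv (deriv g) v| ≤ A) (u : ℝ) {w : ℝ}
    (hw : 0 ≤ w) : |secondDiff g u w| ≤ 2 * A * w ^ 2 := by
  have hA0 : 0 ≤ A := (abs_nonneg _).trans (hA 0)
  have h := Convex.norm_image_sub_le_of_norm_hasDerivWithin_le (f := secondDiff g u)
    (f' := fun t => deriv g (u + t) - deriv g (u - t)) (s := Icc 0 w) (x := 0) (y := w)
    (C := A * (2 * w)) (fun t _ => (hasDerivAt_secondDiff hg u t).hasDerivWithinAt)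
    (fun t ht => ?_) (convex_Icc 0 w) ⟨le_rfl, hw⟩ ⟨hw, le_rfl⟩
  · have h0 : secondDiff g u 0 = 0 := by simp [secondDiff]; ring
    rw [h0, sub_zero, sub_zero, Real.norm_eq_abs, Real.norm_eq_abs, abs_of_nonneg hw] at h
    linarith
  · have h := abs_sub_le_of_abs_deriv_le hg' hA (u - t) (u + t)
    rw [Real.norm_eq_abs]
    refine h.trans (mul_le_mul_of_nonneg_left ?_ hA0)
    rw [show u + t - (u - t) = 2 * t by ring, abs_of_nonneg (by linarith [ht.1])]
    linarith [ht.2]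

/-- Bounds on the first two derivatives together with a bound on the support. -/
lemma exists_bounds_of_hasCompactSupport {g : ℝ → ℝ} (hg : ContDiff ℝ (⊤ : ℕ∞) g)
    (hs : HasCompactSupport g) : ∃ A M : ℝ, 0 ≤ M ∧ (∀ v, |g v| ≤ A) ∧ (∀ v, |deriv g v| ≤ A) ∧
      (∀ v, |deriv (deriv g) v| ≤ A) ∧ (∀ v, M < |v| → g v = 0 ∧ deriv g v = 0) := by
  have hg1 : ContDiff ℝ (⊤ : ℕ∞) (deriv g) := (contDiff_infty_iff_deriv.1 hg).2
  have hg2 : ContDiff ℝ (⊤ : ℕ∞) (deriv (deriv g)) := (contDiff_infty_iff_deriv.1 hg1).2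
  obtain ⟨A0, h0⟩ := hs.exists_bound_of_continuous hg.continuous
  obtain ⟨A1, h1⟩ := hs.deriv.exists_bound_of_continuous hg1.continuous
  obtain ⟨A2, h2⟩ := hs.deriv.deriv.exists_bound_of_continuous hg2.continuous
  obtain ⟨M, hM⟩ := hs.isCompact.isBounded.exists_norm_le
  refine ⟨max A0 (max A1 A2), max M 0, le_max_right _ _, fun v => (h0 v).trans (le_max_left _ _),
    fun v => (h1 v).trans ((le_max_left _ _).trans (le_max_right _ _)),
    fun v => (h2 v).trans ((le_max_right _ _).trans (le_max_right _ _)), fun v hv => ?_⟩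
  have hv' : v ∉ tsupport g := fun h =>
    absurd ((le_max_left M 0).trans_lt hv) (not_lt.2 (hM v h))
  exact ⟨image_eq_zero_of_notMem_tsupport hv',
    image_eq_zero_of_notMem_tsupport fun h => hv' (tsupport_deriv_subset (𝕜 := ℝ) h)⟩

section Estimates

variable {γ B : ℝ} {g : ℝ → ℝ} {u w : ℝ}

lemma abs_levyIntegrand_le_of_le_one (hγ : γ ∈ Ioo (0 : ℝ) 2) (hB : 0 ≤ B)
    (hD : |secondDiff g u w| ≤ B * w ^ 2) (hw : 0 < w) (hw1 : w ≤ 1) :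
    |levyIntegrand γ g u w| ≤ B * w ^ (-(γ / 2)) := by
  have hp : 0 < w ^ (-γ - 1) := Real.rpow_pos_of_pos hw _
  rw [levyIntegrand, abs_mul, abs_of_pos hp]
  have e : w ^ 2 * w ^ (-γ - 1) = w ^ (1 - γ) := by
    rw [← Real.rpow_natCast, ← Real.rpow_add hw]; congr 1; push_cast; ring
  calc |secondDiff g u w| * w ^ (-γ - 1) ≤ B * w ^ 2 * w ^ (-γ - 1) := by gcongr
    _ = B * w ^ (1 - γ) := by rw [mul_assoc, e]
    _ ≤ B * w ^ (-(γ / 2)) := by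
      refine mul_le_mul_of_nonneg_left ?_ hB
      exact Real.rpow_le_rpow_of_exponent_ge hw hw1 (by linarith [hγ.2])

lemma abs_levyIntegrand_le (hD : |secondDiff g u w| ≤ B) (hw : 0 < w) :
    |levyIntegrand γ g u w| ≤ B * w ^ (-γ - 1) := by
  have hp : 0 < w ^ (-γ - 1) := Real.rpow_pos_of_pos hw _
  rw [levyIntegrand, abs_mul, abs_of_pos hp]
  gcongr

lemma abs_levyIntegrandDeriv_le_add (hγ : γ ∈ Ioo (0 : ℝ) 2) (hw : 0 < w) :
    |levyIntegrandDeriv γ g u w| ≤ |deriv g (u + w) - deriv g (u - w)| * w ^ (-γ - 1)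
      + |secondDiff g u w| * (3 * w ^ (-γ - 1 - 1)) := by
  have hp : 0 < w ^ (-γ - 1) := Real.rpow_pos_of_pos hw _
  have hp' : 0 < w ^ (-γ - 1 - 1) := Real.rpow_pos_of_pos hw _
  have hc : |-γ - 1| ≤ 3 := abs_le.2 ⟨by linarith [hγ.2], by linarith [hγ.1]⟩
  unfold levyIntegrandDeriv
  refine (abs_add_le _ _).trans ?_
  rw [abs_mul, abs_mul, abs_mul, abs_of_pos hp, abs_of_pos hp']
  gcongr

lemma abs_levyIntegrandDeriv_le_of_le_one (hγ : γ ∈ Ioo (0 : ℝ) 2) (hB : 0 ≤ B)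
    (hD : |secondDiff g u w| ≤ B * w ^ 2) (hD' : |deriv g (u + w) - deriv g (u - w)| ≤ B * w)
    (hw : 0 < w) (hw1 : w ≤ 1) :
    |levyIntegrandDeriv γ g u w| ≤ 4 * B * w ^ (-(γ / 2) - 1) := by
  have hp : 0 < w ^ (-γ - 1) := Real.rpow_pos_of_pos hw _
  have hp' : 0 < w ^ (-γ - 1 - 1) := Real.rpow_pos_of_pos hw _
  have e1 : w * w ^ (-γ - 1) = w ^ (-γ) := by
    nth_rewrite 1 [← Real.rpow_one w]
    rw [← Real.rpow_add hw]; congr 1; ring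
  have e2 : w ^ 2 * w ^ (-γ - 1 - 1) = w ^ (-γ) := by
    rw [← Real.rpow_natCast, ← Real.rpow_add hw]; congr 1; push_cast; ring
  calc |levyIntegrandDeriv γ g u w|
      ≤ B * w * w ^ (-γ - 1) + B * w ^ 2 * (3 * w ^ (-γ - 1 - 1)) := by
        refine (abs_levyIntegrandDeriv_le_add hγ hw).trans ?_
        gcongr
    _ = B * (w * w ^ (-γ - 1)) + 3 * B * (w ^ 2 * w ^ (-γ - 1 - 1)) := by ring
    _ = 4 * B * w ^ (-γ) := by rw [e1, e2]; ring
    _ ≤ 4 * B * w ^ (-(γ / 2) - 1) := by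
      refine mul_le_mul_of_nonneg_left ?_ (by linarith)
      exact Real.rpow_le_rpow_of_exponent_ge hw hw1 (by linarith [hγ.2])

lemma abs_levyIntegrandDeriv_le_of_one_le (hγ : γ ∈ Ioo (0 : ℝ) 2) (hB : 0 ≤ B)
    (hD : |secondDiff g u w| ≤ B) (hD' : |deriv g (u + w) - deriv g (u - w)| ≤ B)
    (hw1 : 1 ≤ w) : |levyIntegrandDeriv γ g u w| ≤ 4 * B * w ^ (-γ - 1) := by
  have hw : 0 < w := by linarith
  have hp : 0 < w ^ (-γ - 1) := Real.rpow_pos_of_pos hw _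
  have hp' : 0 < w ^ (-γ - 1 - 1) := Real.rpow_pos_of_pos hw _
  have hpp : w ^ (-γ - 1 - 1) ≤ w ^ (-γ - 1) :=
    Real.rpow_le_rpow_of_exponent_le hw1 (by linarith)
  calc |levyIntegrandDeriv γ g u w|
      ≤ B * w ^ (-γ - 1) + B * (3 * w ^ (-γ - 1)) := by
        refine (abs_levyIntegrandDeriv_le_add hγ hw).trans ?_
        gcongr
    _ = 4 * B * w ^ (-γ - 1) := by ring

end Estimates

/-- Outside a large ball, the second difference and its derivative only see steps of size
comparable to `|u|`. -/
lemma secondDiff_eq_zero_of_notMem_Icc {g : ℝ → ℝ} {M : ℝ}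
    (hv : ∀ v, M < |v| → g v = 0 ∧ deriv g v = 0) {u w : ℝ} (hu : M < |u|) (hw : 0 ≤ w)
    (h : w ∉ Icc (|u| - M) (|u| + M)) :
    secondDiff g u w = 0 ∧ deriv g (u + w) - deriv g (u - w) = 0 := by
  have h' : M < |(|u| - w)| := by
    by_contra hh
    rw [not_lt, abs_le] at hh
    exact h ⟨by linarith, by linarith⟩
  have hplus : M < |u + w| := by
    refine h'.trans_le ?_
    have := abs_abs_sub_abs_le_abs_sub u (-w)
    rwa [abs_neg, abs_of_nonneg hw, sub_neg_eq_add] at this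
  have hminus : M < |u - w| := by
    refine h'.trans_le ?_
    have := abs_abs_sub_abs_le_abs_sub u w
    rwa [abs_of_nonneg hw] at this
  simp [secondDiff, hv _ hplus, hv _ hminus, hv _ hu]

/-- All the estimates on `levyIntegrand γ g` needed to control its Riemann sums, with the decay
`(1 + |u|) ^ (-γ - 1)` in the base point `u`. -/
lemma exists_levyIntegrand_bounds {γ : ℝ} (hγ : γ ∈ Ioo (0 : ℝ) 2) {g : ℝ → ℝ}
    (hg : ContDiff ℝ (⊤ : ℕ∞) g) (hs : HasCompactSupport g) :
    ∃ K M : ℝ, 0 ≤ K ∧ 0 ≤ M ∧ ∀ u : ℝ, IntegrableOn (levyIntegrand γ g u) (Ioi 0) ∧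
      (∀ w, 0 < w → w ≤ 1 →
        |levyIntegrand γ g u w| ≤ K * (1 + |u|) ^ (-γ - 1) * w ^ (-(γ / 2))) ∧
      (∀ w, 0 < w → |levyIntegrandDeriv γ g u w| ≤ K * (1 + |u|) ^ (-γ - 1) *
        (w ^ (-(γ / 2) - 1) + (Icc (|u| - M) (|u| + M)).indicator 1 w)) := by
  obtain ⟨A, M, hM, hA0, hA1, hA2, hv⟩ := exists_bounds_of_hasCompactSupport hg hs
  have hA : 0 ≤ A := (abs_nonneg _).trans (hA0 0)
  have hg1 : ContDiff ℝ (⊤ : ℕ∞) (deriv g) := (contDiff_infty_iff_deriv.1 hg).2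
  have hd : Differentiable ℝ g := (contDiff_infty_iff_deriv.1 hg).1
  have hd1 : Differentiable ℝ (deriv g) := (contDiff_infty_iff_deriv.1 hg1).1
  set B : ℝ := 4 * A with hBdef
  have hB : 0 ≤ B := by positivity
  have hDsq : ∀ u w, 0 < w → |secondDiff g u w| ≤ B * w ^ 2 := by
    intro u w hw
    refine (abs_secondDiff_le_sq hd hd1 hA2 u hw.le).trans ?_
    gcongr
    linarith
  have hDc : ∀ u w, |secondDiff g u w| ≤ B := by
    intro u w
    have h1 := abs_le.1 (hA0 (u + w))
    have h2 := abs_le.1 (hA0 (u - w))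
    have h3 := abs_le.1 (hA0 u)
    unfold secondDiff
    exact abs_le.2 ⟨by linarith, by linarith⟩
  have hD1 : ∀ u w, 0 < w → |deriv g (u + w) - deriv g (u - w)| ≤ B * w := by
    intro u w hw
    have h := abs_sub_le_of_abs_deriv_le hd1 hA2 (u - w) (u + w)
    rw [show u + w - (u - w) = 2 * w by ring, abs_of_pos (by linarith : 0 < 2 * w)] at h
    have := mul_nonneg hA hw.le
    linarith
  have hD1c : ∀ u w, |deriv g (u + w) - deriv g (u - w)| ≤ B := by
    intro u w
    have h1 := abs_le.1 (hA1 (u + w))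
    have h2 := abs_le.1 (hA1 (u - w))
    exact abs_le.2 ⟨by linarith, by linarith⟩
  set r : ℝ := (1 + (2 * M + 2)) ^ (-γ - 1) with hr
  have hrpos : 0 < r := Real.rpow_pos_of_pos (by linarith) _
  have h4pos : (0 : ℝ) < (1 / 4) ^ (-γ - 1) := Real.rpow_pos_of_pos (by norm_num) _
  set K : ℝ := 4 * B / r + 4 * B * (1 / 4) ^ (-γ - 1) with hK
  have hKr : 4 * B ≤ K * r := by
    rw [hK, add_mul, div_mul_cancel₀ _ hrpos.ne']
    have : 0 ≤ 4 * B * (1 / 4) ^ (-γ - 1) * r := by positivity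
    linarith
  have hK4 : 4 * B * (1 / 4) ^ (-γ - 1) ≤ K := by
    have : 0 ≤ 4 * B / r := by positivity
    linarith
  have hK0 : 0 ≤ K := by positivity
  refine ⟨K, M, hK0, hM, fun u => ⟨?_, fun w hw hw1 => ?_, fun w hw => ?_⟩⟩
  · have hcont : ContinuousOn (levyIntegrand γ g u) (Ioi 0) := fun w hw =>
      (hasDerivAt_levyIntegrand γ hd u hw).continuousAt.continuousWithinAt
    rw [← Ioc_union_Ioi_eq_Ioi zero_le_one]
    refine IntegrableOn.union ?_ ?_
    · have hi : IntegrableOn (fun w : ℝ => B * w ^ (-(γ / 2))) (Ioc 0 1) :=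
        ((intervalIntegrable_iff_integrableOn_Ioc_of_le zero_le_one).1
          (intervalIntegral.intervalIntegrable_rpow' (by linarith [hγ.2]))).const_mul B
      refine hi.mono' ((hcont.mono Ioc_subset_Ioi_self).aestronglyMeasurable measurableSet_Ioc) ?_
      filter_upwards [ae_restrict_mem measurableSet_Ioc] with w hw
      exact abs_levyIntegrand_le_of_le_one hγ hB (hDsq u w hw.1) hw.1 hw.2
    · have hi : IntegrableOn (fun w : ℝ => B * w ^ (-γ - 1)) (Ioi 1) :=
        (integrableOn_Ioi_rpow_of_lt (by linarith [hγ.1]) one_pos).const_mul B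
      refine hi.mono' ((hcont.mono (Ioi_subset_Ioi zero_le_one)).aestronglyMeasurable
        measurableSet_Ioi) ?_
      filter_upwards [ae_restrict_mem measurableSet_Ioi] with w hw
      exact abs_levyIntegrand_le (hDc u w) (one_pos.trans hw)
  · rcases le_total |u| (2 * M + 2) with hu | hu
    · refine (abs_levyIntegrand_le_of_le_one hγ hB (hDsq u w hw) hw hw1).trans ?_
      have hρ : r ≤ (1 + |u|) ^ (-γ - 1) :=
        Real.rpow_le_rpow_of_nonpos (by positivity) (by linarith) (by linarith [hγ.1])
      have : B ≤ K * (1 + |u|) ^ (-γ - 1) :=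
        (by linarith : B ≤ K * r).trans (mul_le_mul_of_nonneg_left hρ hK0)
      gcongr
    · have hz := (secondDiff_eq_zero_of_notMem_Icc hv (u := u) (w := w) (by linarith) hw.le
        (fun h => by linarith [h.1])).1
      rw [levyIntegrand, hz, zero_mul, abs_zero]
      positivity
  · have hind : 0 ≤ (Icc (|u| - M) (|u| + M)).indicator (1 : ℝ → ℝ) w :=
      indicator_nonneg (fun _ _ => zero_le_one) w
    have hρ0 : 0 ≤ (1 + |u|) ^ (-γ - 1) := by positivity
    have hp0 : 0 ≤ w ^ (-(γ / 2) - 1) := by positivity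
    rcases le_total |u| (2 * M + 2) with hu | hu
    · have hρ : r ≤ (1 + |u|) ^ (-γ - 1) :=
        Real.rpow_le_rpow_of_nonpos (by positivity) (by linarith) (by linarith [hγ.1])
      have hBK : 4 * B ≤ K * (1 + |u|) ^ (-γ - 1) :=
        hKr.trans (mul_le_mul_of_nonneg_left hρ hK0)
      have hmain : |levyIntegrandDeriv γ g u w| ≤ 4 * B * w ^ (-(γ / 2) - 1) := by
        rcases le_total w 1 with hw1 | hw1
        · exact abs_levyIntegrandDeriv_le_of_le_one hγ hB (hDsq u w hw) (hD1 u w hw) hw hw1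
        · refine (abs_levyIntegrandDeriv_le_of_one_le hγ hB (hDc u w) (hD1c u w) hw1).trans ?_
          refine mul_le_mul_of_nonneg_left ?_ (by linarith)
          exact Real.rpow_le_rpow_of_exponent_le hw1 (by linarith [hγ.1])
      refine hmain.trans (mul_le_mul hBK (by linarith) hp0 (by positivity))
    · by_cases hmem : w ∈ Icc (|u| - M) (|u| + M)
      · rw [indicator_of_mem hmem, Pi.one_apply]
        have hw4 : 1 / 4 * (1 + |u|) ≤ w := by linarith [hmem.1]
        calc |levyIntegrandDeriv γ g u w| ≤ 4 * B * w ^ (-γ - 1) :=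
              abs_levyIntegrandDeriv_le_of_one_le hγ hB (hDc u w) (hD1c u w)
                (by linarith [hmem.1])
          _ ≤ 4 * B * (1 / 4 * (1 + |u|)) ^ (-γ - 1) := by
              refine mul_le_mul_of_nonneg_left ?_ (by linarith)
              exact Real.rpow_le_rpow_of_nonpos (by positivity) hw4 (by linarith [hγ.1])
          _ = 4 * B * (1 / 4) ^ (-γ - 1) * (1 + |u|) ^ (-γ - 1) := by
              rw [Real.mul_rpow (by norm_num) (by positivity)]; ring
          _ ≤ K * (1 + |u|) ^ (-γ - 1) := by gcongr
          _ ≤ K * (1 + |u|) ^ (-γ - 1) * (w ^ (-(γ / 2) - 1) + 1) :=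
              le_mul_of_one_le_right (by positivity) (by linarith)
      · obtain ⟨h1, h2⟩ := secondDiff_eq_zero_of_notMem_Icc hv (by linarith) hw.le hmem
        rw [levyIntegrandDeriv, h1, h2, zero_mul, zero_mul, add_zero, abs_zero]
        positivity

/-- Riemann sums of `levyIntegrand γ g u` with mesh `η` converge with rate `η ^ (1 - γ / 2)`,
with decay in the base point `u`. -/
lemma exists_abs_riemannSum_levyIntegrand_sub_le {γ : ℝ} (hγ : γ ∈ Ioo (0 : ℝ) 2) {g : ℝ → ℝ}
    (hg : ContDiff ℝ (⊤ : ℕ∞) g) (hs : HasCompactSupport g) :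
    ∃ C : ℝ, 0 ≤ C ∧ ∀ u η : ℝ, 0 < η → η ≤ 1 →
      Summable (fun k : ℕ => levyIntegrand γ g u (((k : ℝ) + 1) * η)) →
      |η * (∑' k : ℕ, levyIntegrand γ g u (((k : ℝ) + 1) * η))
        - ∫ w in Ioi 0, levyIntegrand γ g u w| ≤ C * (1 + |u|) ^ (-γ - 1) * η ^ (1 - γ / 2) := by
  obtain ⟨K, M, hK, hM, hb⟩ := exists_levyIntegrand_bounds hγ hg hs
  have hγ0 := hγ.1
  have hγ2 := hγ.2
  have hd : Differentiable ℝ g := (contDiff_infty_iff_deriv.1 hg).1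
  have hg1 : ContDiff ℝ (⊤ : ℕ∞) (deriv g) := (contDiff_infty_iff_deriv.1 hg).2
  have hq : 0 < 1 - γ / 2 := by linarith
  refine ⟨K * (1 + 1 / (1 - γ / 2) + (1 / (γ / 2) + 2 * M)), by positivity,
    fun u η hη hη1 hsum => ?_⟩
  obtain ⟨hint, hb0, hb1⟩ := hb u
  set κ : ℝ := K * (1 + |u|) ^ (-γ - 1) with hκ
  have hκ0 : 0 ≤ κ := by positivity
  have hcont := continuousOn_levyIntegrandDeriv γ hg.continuous hg1.continuous u
  have hηq : η * η ^ (-(γ / 2)) = η ^ (1 - γ / 2) := by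
    nth_rewrite 1 [← Real.rpow_one η]
    rw [← Real.rpow_add hη]; congr 1
  set S : Set ℝ := Icc (|u| - M) (|u| + M)
  have hpow : IntegrableOn (fun w : ℝ => w ^ (-(γ / 2) - 1)) (Ioi η) :=
    integrableOn_Ioi_rpow_of_lt (by linarith) hη
  have hind : Integrable (S.indicator (1 : ℝ → ℝ)) :=
    (integrable_indicator_iff measurableSet_Icc).2 continuous_one.integrableOn_Icc
  have hdom : IntegrableOn (fun w : ℝ => κ * (w ^ (-(γ / 2) - 1) + S.indicator 1 w)) (Ioi η) :=
    (hpow.add hind.integrableOn).const_mul κ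
  have hint' : IntegrableOn (levyIntegrandDeriv γ g u) (Ioi η) := by
    refine hdom.mono' ((hcont.mono (Ioi_subset_Ioi hη.le)).aestronglyMeasurable
      measurableSet_Ioi) ?_
    filter_upwards [ae_restrict_mem measurableSet_Ioi] with w hw
    exact hb1 w (hη.trans hw)
  have hR := abs_riemannSum_sub_integral_le hη
    (fun w hw => hasDerivAt_levyIntegrand γ hd u hw) hcont hint hint' hsum
  have h1 : η * |levyIntegrand γ g u η| ≤ κ * η ^ (1 - γ / 2) := by
    calc η * |levyIntegrand γ g u η| ≤ η * (κ * η ^ (-(γ / 2))) := by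
          gcongr; exact hb0 η hη hη1
      _ = κ * η ^ (1 - γ / 2) := by rw [← hηq]; ring
  have h2 : ∫ w in Ioc 0 η, |levyIntegrand γ g u w| ≤ κ * (1 / (1 - γ / 2)) * η ^ (1 - γ / 2) := by
    have hi : IntegrableOn (fun w : ℝ => κ * w ^ (-(γ / 2))) (Ioc 0 η) :=
      ((intervalIntegrable_iff_integrableOn_Ioc_of_le hη.le).1
        (intervalIntegral.intervalIntegrable_rpow' (by linarith))).const_mul κ
    calc ∫ w in Ioc 0 η, |levyIntegrand γ g u w| ≤ ∫ w in Ioc 0 η, κ * w ^ (-(γ / 2)) :=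
          setIntegral_mono_on (hint.mono_set Ioc_subset_Ioi_self).abs hi measurableSet_Ioc
            fun w hw => hb0 w hw.1 (hw.2.trans hη1)
      _ = κ * (1 / (1 - γ / 2)) * η ^ (1 - γ / 2) := by
          rw [integral_const_mul, ← intervalIntegral.integral_of_le hη.le,
            integral_rpow (Or.inl (by linarith)), show -(γ / 2) + 1 = 1 - γ / 2 by ring,
            Real.zero_rpow hq.ne']
          ring
  have h3 : η * ∫ w in Ioi η, |levyIntegrandDeriv γ g u w|
      ≤ κ * (1 / (γ / 2) + 2 * M) * η ^ (1 - γ / 2) := by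
    have hmono : ∫ w in Ioi η, |levyIntegrandDeriv γ g u w|
        ≤ ∫ w in Ioi η, κ * (w ^ (-(γ / 2) - 1) + S.indicator 1 w) :=
      setIntegral_mono_on hint'.abs hdom measurableSet_Ioi fun w hw => hb1 w (hη.trans hw)
    have hI1 : ∫ w in Ioi η, (w : ℝ) ^ (-(γ / 2) - 1) = 1 / (γ / 2) * η ^ (-(γ / 2)) := by
      rw [integral_Ioi_rpow_of_lt (by linarith) hη, show -(γ / 2) - 1 + 1 = -(γ / 2) by ring,
        neg_div_neg_eq]
      ring
    have hI2 : ∫ w in Ioi η, S.indicator (1 : ℝ → ℝ) w ≤ 2 * M := by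
      calc ∫ w in Ioi η, S.indicator (1 : ℝ → ℝ) w ≤ ∫ w, S.indicator (1 : ℝ → ℝ) w :=
            setIntegral_le_integral hind
              (Eventually.of_forall fun w => indicator_nonneg (fun _ _ => zero_le_one) w)
        _ = 2 * M := by
            rw [integral_indicator_one measurableSet_Icc, Real.volume_real_Icc_of_le (by linarith)]
            ring
    have hη_le : η ≤ η ^ (1 - γ / 2) := by
      nth_rewrite 1 [← Real.rpow_one η]
      exact Real.rpow_le_rpow_of_exponent_ge hη hη1 (by linarith)
    rw [integral_const_mul, integral_add hpow hind.integrableOn, hI1] at hmono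
    calc η * ∫ w in Ioi η, |levyIntegrandDeriv γ g u w|
        ≤ η * (κ * (1 / (γ / 2) * η ^ (-(γ / 2)) + 2 * M)) := by
          refine mul_le_mul_of_nonneg_left (hmono.trans ?_) hη.le
          gcongr
      _ = κ * (1 / (γ / 2) * (η * η ^ (-(γ / 2))) + η * (2 * M)) := by ring
      _ ≤ κ * (1 / (γ / 2) * η ^ (1 - γ / 2) + η ^ (1 - γ / 2) * (2 * M)) := by
          rw [hηq]; gcongr
      _ = κ * (1 / (γ / 2) + 2 * M) * η ^ (1 - γ / 2) := by ring
  calc _ ≤ κ * η ^ (1 - γ / 2) + κ * (1 / (1 - γ / 2)) * η ^ (1 - γ / 2)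
        + κ * (1 / (γ / 2) + 2 * M) * η ^ (1 - γ / 2) :=
        hR.trans (add_le_add (add_le_add h1 h2) h3)
    _ = _ := by rw [hκ]; ring

/-- The rescaled discrete generator is a Riemann sum of `levyIntegrand`. -/
lemma hasSum_levyIntegrand_of_bounded {c γ : ℝ} (hc : 0 < c) (hp : Summable (transP c γ))
    {g : ℝ → ℝ} {A : ℝ} (hA : ∀ v, |g v| ≤ A) {n : ℕ} (hn : 0 < n) (x : ℤ) :
    HasSum (fun k : ℕ => levyIntegrand γ g ((x : ℝ) / n) (((k : ℝ) + 1) * (n : ℝ)⁻¹))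
      (c⁻¹ * (n : ℝ) * ((n : ℝ) ^ γ *
        ∑' y : ℤ, (g ((y : ℝ) / n) - g ((x : ℝ) / n)) * transP c γ (y - x))) := by
  have hn0 : (0 : ℝ) < n := by exact_mod_cast hn
  set F : ℤ → ℝ := fun z => (g (((x + z : ℤ) : ℝ) / n) - g ((x : ℝ) / n)) * transP c γ z with hF
  have hFs : Summable F := by
    refine Summable.of_norm_bounded (hp.norm.mul_left (2 * A)) fun z => ?_
    rw [hF, norm_mul]
    refine mul_le_mul_of_nonneg_right ?_ (norm_nonneg _)
    have h1 := hA (((x + z : ℤ) : ℝ) / n)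
    have h2 := hA ((x : ℝ) / n)
    have h3 := abs_sub (g (((x + z : ℤ) : ℝ) / n)) (g ((x : ℝ) / n))
    rw [Real.norm_eq_abs]
    linarith
  have hFt : ∑' y : ℤ, (g ((y : ℝ) / n) - g ((x : ℝ) / n)) * transP c γ (y - x) = ∑' z, F z := by
    rw [← (Equiv.addLeft x).tsum_eq]
    simp [hF]
  have hF0 : F 0 = 0 := by simp [hF]
  have h := (hasSum_nat_add_iff' 1).2 hFs.hasSum.nat_add_neg
  simp only [hF0, Finset.range_one, Finset.sum_singleton, Nat.cast_zero, neg_zero, add_zero,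
    sub_zero] at h
  rw [hFt, ← mul_assoc]
  refine (h.mul_left (c⁻¹ * (n : ℝ) * (n : ℝ) ^ γ)).congr_fun fun k => ?_
  have hk : (0 : ℝ) < (k : ℝ) + 1 := by positivity
  have hz : ((k + 1 : ℕ) : ℤ) ≠ 0 := by positivity
  have hz' : -((k + 1 : ℕ) : ℤ) ≠ 0 := neg_ne_zero.2 hz
  have hpow : (((k : ℝ) + 1) * (n : ℝ)⁻¹) ^ (-γ - 1)
      = ((k : ℝ) + 1) ^ (-γ - 1) * ((n : ℝ) * (n : ℝ) ^ γ) := by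
    rw [Real.mul_rpow hk.le (by positivity), Real.inv_rpow hn0.le, ← Real.rpow_neg hn0.le]
    congr 1
    nth_rewrite 2 [← Real.rpow_one (n : ℝ)]
    rw [← Real.rpow_add hn0]
    congr 1; ring
  have e1 : (x : ℝ) / n + ((k : ℝ) + 1) * (n : ℝ)⁻¹ = ((x + ((k + 1 : ℕ) : ℤ) : ℤ) : ℝ) / n := by
    push_cast; ring
  have e2 : (x : ℝ) / n - ((k : ℝ) + 1) * (n : ℝ)⁻¹
      = ((x + -((k + 1 : ℕ) : ℤ) : ℤ) : ℝ) / n := by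
    push_cast; ring
  have et : ∀ z : ℤ, z ≠ 0 → |(z : ℝ)| = (k : ℝ) + 1 →
      transP c γ z = c * ((k : ℝ) + 1) ^ (-γ - 1) := fun z h0 h1 => by
    rw [transP, if_neg h0, h1]
  rw [hF]
  simp only
  rw [et _ hz (by push_cast; exact abs_of_pos hk),
    et _ hz' (by push_cast; rw [abs_neg]; exact abs_of_pos hk), levyIntegrand, secondDiff, e1, e2,
    hpow]
  field_simp
  ring

lemma summable_one_add_abs_int_rpow {b : ℝ} (hb : 1 < b) :
    Summable fun x : ℤ => (1 + |(x : ℝ)|) ^ (-b) := by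
  refine Summable.of_norm_bounded_eventually (Real.summable_abs_int_rpow hb) ?_
  filter_upwards [(Set.finite_singleton (0 : ℤ)).compl_mem_cofinite] with x hx
  have hx0 : (0 : ℝ) < |(x : ℝ)| := abs_pos.2 (Int.cast_ne_zero.2 hx)
  rw [Real.norm_of_nonneg (by positivity)]
  exact Real.rpow_le_rpow_of_nonpos hx0 (by linarith) (by linarith)

/-- A polynomial-in-time family of test functions satisfies the generator estimate uniformly on
`[0, T]`. -/
lemma SDifMem.exists_abs_generator_sub_fracLap_le {γ c T : ℝ} (hγ : γ ∈ Ioo (0 : ℝ) 2)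
    (hc : 0 < c) (hp : Summable (transP c γ)) (hT : 0 < T) {G : ℝ → ℝ → ℝ} (hG : SDifMem G) :
    ∃ C : ℝ, 0 ≤ C ∧ ∀ n : ℕ, 0 < n → ∀ x : ℤ, ∀ s ∈ Icc (0 : ℝ) T,
      |(n : ℝ) ^ γ * (∑' y : ℤ, (G s ((y : ℝ) / n) - G s ((x : ℝ) / n)) * transP c γ (y - x))
        - fracLap c γ (G s) ((x : ℝ) / n)|
      ≤ C * (1 + |(x : ℝ) / n|) ^ (-γ - 1) * ((n : ℝ)⁻¹) ^ (1 - γ / 2) := by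
  obtain ⟨k, a, ha, hGa⟩ := hG
  choose C hC0 hC using fun j => exists_abs_riemannSum_levyIntegrand_sub_le hγ (ha j).1 (ha j).2
  choose A hA using fun j => (ha j).2.exists_bound_of_continuous (ha j).1.continuous
  choose K M _ _ hb using fun j => exists_levyIntegrand_bounds hγ (ha j).1 (ha j).2
  refine ⟨c * ∑ j ∈ Finset.range (k + 1), T ^ j * C j,
    mul_nonneg hc.le (Finset.sum_nonneg fun j _ => mul_nonneg (pow_nonneg hT.le j) (hC0 j)),
    fun n hn x s hs => ?_⟩
  have hn0 : (0 : ℝ) < n := by exact_mod_cast hn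
  have hη : (0 : ℝ) < (n : ℝ)⁻¹ := inv_pos.2 hn0
  have hη1 : (n : ℝ)⁻¹ ≤ 1 := inv_le_one_of_one_le₀ (by exact_mod_cast hn)
  set u : ℝ := (x : ℝ) / n
  have hGs : G s = fun v => ∑ j ∈ Finset.range (k + 1), a j v * s ^ j := funext (hGa s)
  have hcont : Continuous (G s) := by
    rw [hGs]
    exact continuous_finsetSum _ fun j _ => (ha j).1.continuous.mul continuous_const
  have hbdd : ∀ v, |G s v| ≤ ∑ j ∈ Finset.range (k + 1), A j * |s ^ j| := fun v => by
    rw [hGa]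
    refine (Finset.abs_sum_le_sum_abs _ _).trans (Finset.sum_le_sum fun j _ => ?_)
    rw [abs_mul]
    exact mul_le_mul_of_nonneg_right (hA j v) (abs_nonneg _)
  have hlevy : ∀ w, levyIntegrand γ (G s) u w
      = ∑ j ∈ Finset.range (k + 1), s ^ j * levyIntegrand γ (a j) u w := fun w => by
    simp only [levyIntegrand, secondDiff, hGa, Finset.mul_sum, ← Finset.sum_add_distrib,
      ← Finset.sum_sub_distrib, Finset.sum_mul]
    exact Finset.sum_congr rfl fun j _ => by ring
  have hia : ∀ j, IntegrableOn (fun w => s ^ j * levyIntegrand γ (a j) u w) (Ioi 0) :=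
    fun j => (hb j u).1.const_mul _
  have hi : IntegrableOn (levyIntegrand γ (G s) u) (Ioi 0) := by
    rw [funext hlevy]
    exact integrable_finsetSum _ fun j _ => hia j
  have hsum := fun j => (hasSum_levyIntegrand_of_bounded hc hp (hA j) hn x).summable
  have hS := (hasSum_levyIntegrand_of_bounded hc hp hbdd hn x).tsum_eq
  have hgen : (n : ℝ) ^ γ *
      (∑' y : ℤ, (G s ((y : ℝ) / n) - G s ((x : ℝ) / n)) * transP c γ (y - x))
      = c * ((n : ℝ)⁻¹ * ∑' i : ℕ, levyIntegrand γ (G s) u (((i : ℝ) + 1) * (n : ℝ)⁻¹)) := by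
    rw [hS]; field_simp
  have htsum : ∑' i : ℕ, levyIntegrand γ (G s) u (((i : ℝ) + 1) * (n : ℝ)⁻¹)
      = ∑ j ∈ Finset.range (k + 1),
        s ^ j * ∑' i : ℕ, levyIntegrand γ (a j) u (((i : ℝ) + 1) * (n : ℝ)⁻¹) := by
    simp only [hlevy]
    rw [Summable.tsum_finsetSum fun j _ => (hsum j).mul_left _]
    exact Finset.sum_congr rfl fun j _ => tsum_mul_left
  have hint : ∫ w in Ioi 0, levyIntegrand γ (G s) u w
      = ∑ j ∈ Finset.range (k + 1), s ^ j * ∫ w in Ioi 0, levyIntegrand γ (a j) u w := by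
    simp only [hlevy]
    rw [integral_finsetSum _ fun j _ => hia j]
    exact Finset.sum_congr rfl fun j _ => integral_const_mul _ _
  rw [hgen, fracLap_eq_integral_levyIntegrand hγ.1 hcont hbdd u hi, htsum, hint, ← mul_sub,
    Finset.mul_sum, ← Finset.sum_sub_distrib, abs_mul, abs_of_pos hc, mul_assoc, mul_assoc]
  refine mul_le_mul_of_nonneg_left ?_ hc.le
  rw [Finset.sum_mul]
  refine (Finset.abs_sum_le_sum_abs _ _).trans (Finset.sum_le_sum fun j _ => ?_)
  rw [mul_left_comm, ← mul_sub, abs_mul, abs_of_nonneg (pow_nonneg hs.1 j), mul_assoc]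
  refine mul_le_mul (pow_le_pow_left₀ hs.1 hs.2 j) ?_ (abs_nonneg _) (pow_nonneg hT.le j)
  rw [← mul_assoc]
  exact hC j u _ hη hη1 (hsum j)

theorem stmt12 (γ c T : ℝ) (hγ : γ ∈ Set.Ioo (0 : ℝ) 2) (hc : 0 < c)
    (hprob : HasSum (transP c γ) 1) (hT : 0 < T)
    (G : ℝ → ℝ → ℝ) (hG : SDifMem G) :
    Tendsto (fun n : ℕ => (n : ℝ)⁻¹ * ∑' x : ℤ,
        ⨆ s ∈ Set.Icc (0 : ℝ) T,
          |(n : ℝ) ^ γ * (∑' y : ℤ, (G s ((y : ℝ) / n) - G s ((x : ℝ) / n)) * transP c γ (y - x))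
            - fracLap c γ (G s) ((x : ℝ) / n)|)
      atTop (𝓝 0) := by
  obtain ⟨C, hC0, hC⟩ := hG.exists_abs_generator_sub_fracLap_le hγ hc hprob.summable hT
  have hγ0 := hγ.1
  have hγ2 := hγ.2
  set δ : ℝ := γ * (2 - γ) / 4 with hδ
  have hδ0 : 0 < δ := by
    have : 0 < γ * (2 - γ) := mul_pos hγ0 (by linarith)
    positivity
  have hδγ : δ ≤ γ := by nlinarith
  have hδ1 : δ < 1 - γ / 2 := by nlinarith
  have hsum : Summable fun x : ℤ => (1 + |(x : ℝ)|) ^ (-(1 + δ)) :=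
    summable_one_add_abs_int_rpow (by linarith)
  set S : ℝ := ∑' x : ℤ, (1 + |(x : ℝ)|) ^ (-(1 + δ))
  have hlim : Tendsto (fun n : ℕ => C * S * (n : ℝ) ^ (-(1 - γ / 2 - δ))) atTop (𝓝 0) := by
    have h := (tendsto_rpow_neg_atTop (by linarith : 0 < 1 - γ / 2 - δ)).comp
      tendsto_natCast_atTop_atTop
    simpa using h.const_mul (C * S)
  refine squeeze_zero' (Eventually.of_forall fun n => ?_) ?_ hlim
  · exact mul_nonneg (by positivity) (tsum_nonneg fun x => Real.iSup_nonneg fun s =>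
      Real.iSup_nonneg fun _ => abs_nonneg _)
  filter_upwards [eventually_gt_atTop 0] with n hn
  have hn0 : (0 : ℝ) < n := by exact_mod_cast hn
  have hn1 : (1 : ℝ) ≤ n := by exact_mod_cast hn
  set D : ℝ := C * (n : ℝ) ^ (1 + δ) * ((n : ℝ)⁻¹) ^ (1 - γ / 2) with hD
  have hweight : ∀ x : ℤ, (1 + |(x : ℝ) / n|) ^ (-γ - 1)
      ≤ (n : ℝ) ^ (1 + δ) * (1 + |(x : ℝ)|) ^ (-(1 + δ)) := fun x => by
    have h1 : (1 : ℝ) ≤ 1 + |(x : ℝ) / n| := by linarith [abs_nonneg ((x : ℝ) / n)]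
    have h2 : (n : ℝ)⁻¹ * (1 + |(x : ℝ)|) ≤ 1 + |(x : ℝ) / n| := by
      rw [abs_div, abs_of_pos hn0, mul_add, mul_one, inv_mul_eq_div]
      linarith [inv_le_one_of_one_le₀ hn1]
    calc (1 + |(x : ℝ) / n|) ^ (-γ - 1) ≤ (1 + |(x : ℝ) / n|) ^ (-(1 + δ)) :=
          Real.rpow_le_rpow_of_exponent_le h1 (by linarith)
      _ ≤ ((n : ℝ)⁻¹ * (1 + |(x : ℝ)|)) ^ (-(1 + δ)) :=
          Real.rpow_le_rpow_of_nonpos (by positivity) h2 (by linarith)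
      _ = (n : ℝ) ^ (1 + δ) * (1 + |(x : ℝ)|) ^ (-(1 + δ)) := by
          rw [Real.mul_rpow (by positivity) (by positivity), Real.inv_rpow hn0.le,
            Real.rpow_neg hn0.le, inv_inv]
  have hterm : ∀ x : ℤ, (⨆ s ∈ Set.Icc (0 : ℝ) T,
      |(n : ℝ) ^ γ * (∑' y : ℤ, (G s ((y : ℝ) / n) - G s ((x : ℝ) / n)) * transP c γ (y - x))
        - fracLap c γ (G s) ((x : ℝ) / n)|) ≤ D * (1 + |(x : ℝ)|) ^ (-(1 + δ)) := fun x => by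
    refine Real.iSup_le (fun s => Real.iSup_le (fun hs => ?_) (by positivity)) (by positivity)
    refine (hC n hn x s hs).trans ?_
    calc C * (1 + |(x : ℝ) / n|) ^ (-γ - 1) * ((n : ℝ)⁻¹) ^ (1 - γ / 2)
        ≤ C * ((n : ℝ) ^ (1 + δ) * (1 + |(x : ℝ)|) ^ (-(1 + δ))) * ((n : ℝ)⁻¹) ^ (1 - γ / 2) := by
          gcongr; exact hweight x
      _ = D * (1 + |(x : ℝ)|) ^ (-(1 + δ)) := by rw [hD]; ring
  have hle := Summable.tsum_le_tsum hterm
    (Summable.of_nonneg_of_le (fun x => Real.iSup_nonneg fun s =>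
      Real.iSup_nonneg fun _ => abs_nonneg _) hterm (hsum.mul_left D)) (hsum.mul_left D)
  rw [tsum_mul_left] at hle
  refine (mul_le_mul_of_nonneg_left hle (by positivity)).trans (le_of_eq ?_)
  have hpow : (n : ℝ)⁻¹ * ((n : ℝ) ^ (1 + δ) * ((n : ℝ)⁻¹) ^ (1 - γ / 2))
      = (n : ℝ) ^ (-(1 - γ / 2 - δ)) := by
    rw [Real.inv_rpow hn0.le, ← Real.rpow_neg hn0.le, ← Real.rpow_neg_one,
      ← Real.rpow_add hn0, ← Real.rpow_add hn0]
    congr 1; ring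
  rw [← hpow, hD]
  ring
end

section
/- Let γ ∈ (0,2), T > 0, let S ⊆ S₀ be a set of bonds satisfying the thin-barrier condition: there exists δ ∈ [0,1] with δ > γ−1 such that ∑_{{x,y}∈S} |y−x|^δ p(y−x) < ∞. Then for every G ∈ S_Dif, lim_{n→∞} n^{γ−1} ∑_{{x,y}∈S} p(y−x) · sup_{s∈[0,T]} |G(s, y/n) − G(s, x/n)| = 0. -/
open MeasureTheory Filter Set Topology

/-- A compactly supported smooth function is `δ`-Hölder for every `δ ∈ [0,1]`. -/
theorem exists_holder_bound {f : ℝ → ℝ} (hf : ContDiff ℝ (⊤ : ℕ∞) f) (hs : HasCompactSupport f)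
    {δ : ℝ} (hδ : δ ∈ Set.Icc (0 : ℝ) 1) :
    ∃ K : ℝ, 0 ≤ K ∧ ∀ u v : ℝ, |f v - f u| ≤ K * |v - u| ^ δ := by
  obtain ⟨L, hL⟩ := ContDiff.lipschitzWith_of_hasCompactSupport hs hf (by simp)
  obtain ⟨M, hM⟩ := hs.exists_bound_of_continuous hf.continuous
  have hM0 : 0 ≤ M := (norm_nonneg _).trans (hM 0)
  refine ⟨2 * M + L, by positivity, fun u v => ?_⟩
  have hlip : |f v - f u| ≤ L * |v - u| := by
    simpa [Real.dist_eq] using hL.dist_le_mul v u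
  have hbdd : |f v - f u| ≤ 2 * M := by
    have := abs_sub (f v) (f u)
    have h1 := hM u
    have h2 := hM v
    rw [Real.norm_eq_abs] at h1 h2
    linarith
  have hL0 : (0 : ℝ) ≤ L := L.2
  rcases le_total |v - u| 1 with h | h
  · have hr : |v - u| ≤ |v - u| ^ δ := Real.self_le_rpow_of_le_one (abs_nonneg _) h hδ.2
    nlinarith [mul_le_mul_of_nonneg_left hr hL0, abs_nonneg (v - u)]
  · have hr : 1 ≤ |v - u| ^ δ := Real.one_le_rpow h hδ.1
    nlinarith

/-- Functions in `S_Dif` are `δ`-Hölder in space, uniformly for times in `[0,T]`. -/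
theorem SDifMem.exists_holder_bound {G : ℝ → ℝ → ℝ} (hG : SDifMem G) (T : ℝ)
    {δ : ℝ} (hδ : δ ∈ Set.Icc (0 : ℝ) 1) :
    ∃ K : ℝ, 0 ≤ K ∧ ∀ s ∈ Set.Icc (0 : ℝ) T, ∀ u v : ℝ,
      |G s v - G s u| ≤ K * |v - u| ^ δ := by
  obtain ⟨k, a, ha, hG⟩ := hG
  choose K hK0 hK using fun j => _root_.exists_holder_bound (ha j).1 (ha j).2 hδ
  refine ⟨∑ j ∈ Finset.range (k + 1), K j * |T| ^ j,
    Finset.sum_nonneg fun j _ => mul_nonneg (hK0 j) (by positivity), fun s hs u v => ?_⟩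
  rw [hG, hG, ← Finset.sum_sub_distrib, Finset.sum_mul]
  refine (Finset.abs_sum_le_sum_abs _ _).trans (Finset.sum_le_sum fun j _ => ?_)
  have hsT : |s| ^ j ≤ |T| ^ j :=
    pow_le_pow_left₀ (abs_nonneg s) (abs_le_abs_of_nonneg hs.1 hs.2) j
  calc |a j v * s ^ j - a j u * s ^ j| = |a j v - a j u| * |s| ^ j := by
        rw [← sub_mul, abs_mul, abs_pow]
    _ ≤ (K j * |v - u| ^ δ) * |T| ^ j := by
        have h := hK j u v
        have := (abs_nonneg _).trans h
        gcongr
    _ = K j * |T| ^ j * |v - u| ^ δ := by ring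

theorem transP_nonneg {c : ℝ} (hc : 0 ≤ c) (γ : ℝ) (z : ℤ) : 0 ≤ transP c γ z := by
  unfold transP
  split_ifs <;> positivity

theorem stmt13 (γ c T : ℝ) (hγ : γ ∈ Set.Ioo (0 : ℝ) 2) (hc : 0 < c)
    (hprob : HasSum (transP c γ) 1) (hT : 0 < T)
    -- a bond {x,y} with x < 0 ≤ y is encoded as the ordered pair (x,y)
    (S : Set (ℤ × ℤ)) (hS : S ⊆ {b : ℤ × ℤ | b.1 < 0 ∧ 0 ≤ b.2})
    (hthin : ∃ δ ∈ Set.Icc (0 : ℝ) 1, γ - 1 < δ ∧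
      Summable (fun b : S => |((b : ℤ × ℤ).2 - (b : ℤ × ℤ).1 : ℝ)| ^ δ *
        transP c γ ((b : ℤ × ℤ).2 - (b : ℤ × ℤ).1)))
    (G : ℝ → ℝ → ℝ) (hG : SDifMem G) :
    Tendsto (fun n : ℕ => (n : ℝ) ^ (γ - 1) *
        ∑' b : S, transP c γ ((b : ℤ × ℤ).2 - (b : ℤ × ℤ).1) *
          ⨆ s ∈ Set.Icc (0 : ℝ) T,
            |G s (((b : ℤ × ℤ).2 : ℝ) / n) - G s (((b : ℤ × ℤ).1 : ℝ) / n)|)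
      atTop (𝓝 0) := by
  obtain ⟨δ, hδ, hγδ, hsum⟩ := hthin
  obtain ⟨K, hK0, hK⟩ := hG.exists_holder_bound T hδ
  set w : S → ℝ := fun b => |((b : ℤ × ℤ).2 - (b : ℤ × ℤ).1 : ℝ)| ^ δ *
    transP c γ ((b : ℤ × ℤ).2 - (b : ℤ × ℤ).1) with hw
  have hlim : Tendsto (fun n : ℕ => (K * ∑' b, w b) * (n : ℝ) ^ (-(δ - (γ - 1)))) atTop (𝓝 0) := by
    simpa using ((tendsto_rpow_neg_atTop (sub_pos.2 hγδ)).comp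
      tendsto_natCast_atTop_atTop).const_mul (K * ∑' b, w b)
  have hsup_nonneg : ∀ (n : ℕ) (b : S), 0 ≤ ⨆ s ∈ Set.Icc (0 : ℝ) T,
      |G s (((b : ℤ × ℤ).2 : ℝ) / n) - G s (((b : ℤ × ℤ).1 : ℝ) / n)| := fun n b =>
    Real.iSup_nonneg fun s => Real.iSup_nonneg fun _ => abs_nonneg _
  refine squeeze_zero' (Eventually.of_forall fun n => ?_) ?_ hlim
  · exact mul_nonneg (by positivity) (tsum_nonneg fun b =>
      mul_nonneg (transP_nonneg hc.le γ _) (hsup_nonneg n b))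
  filter_upwards [eventually_gt_atTop 0] with n hn
  have hn' : (0 : ℝ) < n := Nat.cast_pos.2 hn
  have hterm : ∀ b : S, transP c γ ((b : ℤ × ℤ).2 - (b : ℤ × ℤ).1) *
      (⨆ s ∈ Set.Icc (0 : ℝ) T,
        |G s (((b : ℤ × ℤ).2 : ℝ) / n) - G s (((b : ℤ × ℤ).1 : ℝ) / n)|) ≤
      K * (n : ℝ) ^ (-δ) * w b := by
    intro b
    have hdist : |((b : ℤ × ℤ).2 : ℝ) / n - ((b : ℤ × ℤ).1 : ℝ) / n| ^ δ =
        |((b : ℤ × ℤ).2 - (b : ℤ × ℤ).1 : ℝ)| ^ δ * (n : ℝ) ^ (-δ) := by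
      rw [← sub_div, abs_div, abs_of_pos hn', Real.div_rpow (abs_nonneg _) hn'.le,
        Real.rpow_neg hn'.le, div_eq_mul_inv]
    have hsup : (⨆ s ∈ Set.Icc (0 : ℝ) T,
        |G s (((b : ℤ × ℤ).2 : ℝ) / n) - G s (((b : ℤ × ℤ).1 : ℝ) / n)|) ≤
        K * (|((b : ℤ × ℤ).2 - (b : ℤ × ℤ).1 : ℝ)| ^ δ * (n : ℝ) ^ (-δ)) := by
      have hnonneg : 0 ≤ K * (|((b : ℤ × ℤ).2 - (b : ℤ × ℤ).1 : ℝ)| ^ δ * (n : ℝ) ^ (-δ)) := by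
        positivity
      exact Real.iSup_le (fun s => Real.iSup_le (fun hs => hdist ▸ hK s hs _ _) hnonneg) hnonneg
    calc _ ≤ _ := mul_le_mul_of_nonneg_left hsup (transP_nonneg hc.le γ _)
      _ = _ := by simp only [hw]; ring
  have hdom : Summable fun b => K * (n : ℝ) ^ (-δ) * w b := hsum.mul_left _
  have htsum := (Summable.of_nonneg_of_le (fun b =>
    mul_nonneg (transP_nonneg hc.le γ _) (hsup_nonneg n b)) hterm hdom).tsum_le_tsum hterm hdom
  rw [tsum_mul_left] at htsum
  calc _ ≤ _ := mul_le_mul_of_nonneg_left htsum (by positivity)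
    _ = (K * ∑' b, w b) * ((n : ℝ) ^ (γ - 1) * (n : ℝ) ^ (-δ)) := by ring
    _ = _ := by rw [← Real.rpow_add hn']; ring_nf
end
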